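/- arXiv:1406.6210 — 9 statements merged into one kernel-verified Lean document; each statement's English description precedes it below -/
import Mathlib

section
/- Let L be an even integer and let q1, q2 ≥ 2 be integers with q1 + q2 ≤ L − 2; set q3 = L − q1 − q2, suppose q1, q2, q3 are pairwise distinct, and let q_l < q_m < q_u be the increasing rearrangement of q1, q2, q3. Let I = {0, q1, q1 + q2} ⊆ Z_L, so that d*(I) = {q_l, q_m, q_u, L − q_u, L − q_m, L − q_l}. If q_u < L/2, then: (i) if q_l + 1 = q_m = q_u − 1 = L/3, then |d⁺(I)| = 8; (ii) otherwise, |d⁺(I)| ≥ 10. -/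
open Finset

/-- The set of differences of a codeword `I ⊆ ℤ_L`. -/
def dset {L : ℕ} (I : Finset (ZMod L)) : Finset (ZMod L) :=
  (I ×ˢ I).image fun p => p.1 - p.2

/-- The set of nonzero differences. -/
def dstar {L : ℕ} (I : Finset (ZMod L)) : Finset (ZMod L) := dset I \ {0}

/-- The set of shifted nonzero differences `d⁺(I) = d*(I) ∪ (d*(I)+1)`. -/
def dplus {L : ℕ} (I : Finset (ZMod L)) : Finset (ZMod L) :=
  dstar I ∪ (dstar I).image (· + 1)


set_option maxHeartbeats 1000000 in
theorem mem_dstar_aux (L q1 q2 q3 : ℕ) (h1 : 0 < q1) (h2 : 0 < q2) (h3 : 0 < q3)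
    (hs : q1 + q2 + q3 = L) (x : ZMod L) :
    x ∈ dstar ({0, (q1 : ZMod L), ((q1 + q2 : ℕ) : ZMod L)} : Finset (ZMod L)) ↔
      ∃ q ∈ ({q1, q2, q3} : Multiset ℕ), x = (q : ZMod L) ∨ x = ((L - q : ℕ) : ZMod L) := by
  have nz : ∀ q : ℕ, 0 < q → q < L → (q : ZMod L) ≠ 0 := by
    intro q h h' h0
    rw [ZMod.natCast_eq_zero_iff] at h0
    exact absurd (Nat.le_of_dvd h h0) (by omega)
  have n1 := nz q1 h1 (by omega)
  have n2 := nz q2 h2 (by omega)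
  have n3 := nz (q1 + q2) (by omega) (by omega)
  have e3 : (q3 : ZMod L) = -((q1 : ZMod L) + q2) := by
    have : ((q1 + q2 + q3 : ℕ) : ZMod L) = 0 := by rw [hs]; simp
    push_cast at this
    linear_combination this
  have s1 : ((L - q1 : ℕ) : ZMod L) = - q1 := by
    rw [Nat.cast_sub (by omega)]; simp
  have s2 : ((L - q2 : ℕ) : ZMod L) = - q2 := by
    rw [Nat.cast_sub (by omega)]; simp
  have s3 : ((L - q3 : ℕ) : ZMod L) = q1 + q2 := by
    rw [Nat.cast_sub (by omega), e3]; simp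
  push_cast at n3
  have n4 : -(q2 : ZMod L) + -q1 ≠ 0 := fun h => n3 (by linear_combination -h)
  have key : x ∈ dstar ({0, (q1 : ZMod L), ((q1 + q2 : ℕ) : ZMod L)} : Finset (ZMod L)) ↔
      (x = q1 ∨ x = -q1 ∨ x = q2 ∨ x = -q2 ∨ x = q1 + q2 ∨ x = -(q1 + q2 : ZMod L)) := by
    simp only [dstar, dset, mem_sdiff, mem_image, mem_product, mem_insert, mem_singleton,
      Prod.exists]
    push_cast
    constructor
    · rintro ⟨⟨a, b, ⟨rfl | rfl | rfl, rfl | rfl | rfl⟩, rfl⟩, h⟩ <;> simp at h ⊢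
    · rintro (rfl | rfl | rfl | rfl | rfl | rfl)
      · exact ⟨⟨q1, 0, by simp, by simp⟩, n1⟩
      · exact ⟨⟨0, q1, by simp, by simp⟩, by simpa using n1⟩
      · exact ⟨⟨q1 + q2, q1, by simp, by simp⟩, n2⟩
      · exact ⟨⟨q1, q1 + q2, by simp, by simp⟩, by simpa using n2⟩
      · exact ⟨⟨q1 + q2, 0, by simp, by simp⟩, n3⟩
      · exact ⟨⟨0, q1 + q2, by simp, by simp⟩, by simpa using n4⟩
  rw [key]
  simp only [Multiset.insert_eq_cons, Multiset.mem_cons, Multiset.mem_singleton,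
    exists_eq_or_imp, exists_eq_left, s1, s2, s3, e3]
  clear key n1 n2 n3 n4 nz e3 s1 s2 s3 h1 h2 h3 hs
  constructor
  · rintro (h | h | h | h | h | h) <;> simp only [h, true_or, or_true]
  · rintro ((h | h) | (h | h) | (h | h)) <;> simp only [h, true_or, or_true]

theorem dplus_card_nonequidiff_qu_small (L q1 q2 q3 ql qm qu : ℕ) (hL : Even L)
    (hq1 : 2 ≤ q1) (hq2 : 2 ≤ q2) (hsum : q1 + q2 ≤ L - 2)
    (hq3 : q3 = L - q1 - q2)
    (hperm : ({q1, q2, q3} : Multiset ℕ) = {ql, qm, qu})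
    (hlm : ql < qm) (hmu : qm < qu)
    (I : Finset (ZMod L)) (hI : I = {0, (q1 : ZMod L), ((q1 + q2 : ℕ) : ZMod L)})
    (hqu : qu < L / 2) :
    (ql + 1 = qm ∧ qm + 1 = qu ∧ 3 * qm = L → (dplus I).card = 8) ∧
    (¬ (ql + 1 = qm ∧ qm + 1 = qu ∧ 3 * qm = L) → 10 ≤ (dplus I).card) := by
  have hs : q1 + q2 + q3 = L := by omega
  have hs' : ql + qm + qu = L := by
    have := congrArg Multiset.sum hperm
    simp at this
    omega
  have hl : 2 ≤ ql := by
    have : ql ∈ ({q1, q2, q3} : Multiset ℕ) := by rw [hperm]; simp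
    simp at this
    omega
  have hd := mem_dstar_aux L q1 q2 q3 (by omega) (by omega) (by omega) hs
  rw [← hI, hperm] at hd
  simp only [Multiset.insert_eq_cons, Multiset.mem_cons, Multiset.mem_singleton,
    exists_eq_or_imp, exists_eq_left] at hd
  clear hperm hI
  let S : Finset ℕ := {ql, qm, qu, L - qu, L - qm, L - ql,
    ql + 1, qm + 1, qu + 1, L - qu + 1, L - qm + 1, L - ql + 1}
  have hS : dplus I = S.image (fun n : ℕ => (n : ZMod L)) := by
    ext x
    simp only [dplus, mem_union, mem_image, hd, S, mem_insert, mem_singleton,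
      exists_eq_or_imp, exists_eq_left, or_and_right, exists_or, Nat.cast_add, Nat.cast_one,
      eq_comm (b := x)]
    tauto
  have hcard : (dplus I).card = S.card := by
    rw [hS]
    apply card_image_of_injOn
    have hlt : ∀ a ∈ S, a < L := by
      intro a ha
      simp only [S, mem_insert, mem_singleton] at ha
      omega
    intro a ha b hb hab
    have := (ZMod.natCast_eq_natCast_iff' a b L).1 hab
    rwa [Nat.mod_eq_of_lt (hlt a ha), Nat.mod_eq_of_lt (hlt b hb)] at this
  rw [hcard]
  obtain ⟨k, hk⟩ := hL
  constructor
  · rintro ⟨ha, hb, hc⟩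
    have : S = {ql, ql+1, ql+2, ql+3, L - qu, L - qu + 1, L - qu + 2, L - qu + 3} := by
      ext x
      simp only [S, mem_insert, mem_singleton]
      omega
    rw [this]
    repeat rw [card_insert_of_notMem (by simp only [mem_insert, mem_singleton]; omega)]
    simp
  · intro hn
    by_cases hm : ql + 1 = qm
    · have hm2 : qm + 1 ≠ qu := by omega
      have : ({ql, qm, qm + 1, qu, qu + 1, L - qu, L - qu + 1, L - qm, L - ql, L - ql + 1} :
          Finset ℕ) ⊆ S := by
        intro x
        simp only [S, mem_insert, mem_singleton]
        omega
      refine le_trans (le_of_eq ?_) (card_le_card this)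
      repeat rw [card_insert_of_notMem (by simp only [mem_insert, mem_singleton]; omega)]
      simp
    · have : ({ql, ql + 1, qm, qu, qu + 1, L - qu, L - qm, L - qm + 1, L - ql, L - ql + 1} :
          Finset ℕ) ⊆ S := by
        intro x
        simp only [S, mem_insert, mem_singleton]
        omega
      refine le_trans (le_of_eq ?_) (card_le_card this)
      repeat rw [card_insert_of_notMem (by simp only [mem_insert, mem_singleton]; omega)]
      simp
end

section
/- Let L be an even integer and let q1, q2 ≥ 2 be integers with q1 + q2 ≤ L − 2; set q3 = L − q1 − q2, suppose q1, q2, q3 are pairwise distinct, and let q_l < q_m < q_u be the increasing rearrangement of q1, q2, q3. Let I = {0, q1, q1 + q2} ⊆ Z_L. If q_u ≥ L/2, then: (i) if q_m = q_l + 1 = (L + 2)/4 and q_u = L/2, then |d⁺(I)| = 8; (ii) otherwise, |d⁺(I)| ≥ 10. -/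
open Finset

lemma dstar_aux (L q1 q2 q3 : ℕ) (h1 : 2 ≤ q1) (h2 : 2 ≤ q2) (h3 : 2 ≤ q3)
    (hs : q1 + q2 + q3 = L) :
    dstar ({0, (q1 : ZMod L), ((q1 + q2 : ℕ) : ZMod L)} : Finset (ZMod L)) =
      (({q1, q2, q3} : Multiset ℕ).toFinset ∪
        ({q1, q2, q3} : Multiset ℕ).toFinset.image (fun x => L - x)).image
          (fun n : ℕ => (n : ZMod L)) := by
  have hz : ∀ n : ℕ, 0 < n → n < L → (n : ZMod L) ≠ 0 := by
    intro n hn hl h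
    rw [ZMod.natCast_eq_zero_iff] at h
    exact absurd (Nat.le_of_dvd hn h) (by omega)
  have hsum : (q1 : ZMod L) + q2 + q3 = 0 := by
    have : ((q1 + q2 + q3 : ℕ) : ZMod L) = 0 := by rw [hs]; simp
    simpa using this
  have z1 := hz q1 (by omega) (by omega)
  have z2 := hz q2 (by omega) (by omega)
  have z3 := hz q3 (by omega) (by omega)
  have n1 : ((L - q1 : ℕ) : ZMod L) = - q1 := by
    rw [Nat.cast_sub (by omega)]; simp
  have n2 : ((L - q2 : ℕ) : ZMod L) = - q2 := by
    rw [Nat.cast_sub (by omega)]; simp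
  have n3 : ((L - q3 : ℕ) : ZMod L) = - q3 := by
    rw [Nat.cast_sub (by omega)]; simp
  have e3 : (q3 : ZMod L) = -(q1 + q2) := by linear_combination hsum
  have rhs : ∀ x : ZMod L, x ∈ (({q1, q2, q3} : Multiset ℕ).toFinset ∪
        ({q1, q2, q3} : Multiset ℕ).toFinset.image (fun x => L - x)).image
          (fun n : ℕ => (n : ZMod L)) ↔ (x = q1 ∨ x = q2 ∨ x = q3 ∨ x = -q1 ∨ x = -q2 ∨ x = -q3) := by
    intro x
    simp only [Finset.mem_image, Finset.mem_union, Multiset.mem_toFinset,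
      Multiset.insert_eq_cons, Multiset.mem_cons, Multiset.mem_singleton]
    constructor
    · rintro ⟨n, (h | ⟨m, h, rfl⟩), rfl⟩
      · rcases h with rfl | rfl | rfl <;> simp
      · rcases h with rfl | rfl | rfl <;> simp [n1, n2, n3]
    · rintro (h | h | h | h | h | h)
      · exact ⟨q1, by simp, h.symm⟩
      · exact ⟨q2, by simp, h.symm⟩
      · exact ⟨q3, by simp, h.symm⟩
      · exact ⟨L - q1, Or.inr ⟨q1, by simp, rfl⟩, by rw [h, n1]⟩
      · exact ⟨L - q2, Or.inr ⟨q2, by simp, rfl⟩, by rw [h, n2]⟩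
      · exact ⟨L - q3, Or.inr ⟨q3, by simp, rfl⟩, by rw [h, n3]⟩
  ext x
  rw [rhs]
  simp only [dstar, dset, Finset.mem_sdiff, Finset.mem_image, Finset.mem_product,
    Finset.mem_insert, Finset.mem_singleton, Prod.exists, Nat.cast_add]
  rw [e3] at z3 ⊢
  constructor
  · rintro ⟨⟨a, b, ⟨ha, hb⟩, rfl⟩, hx⟩
    rcases ha with rfl | rfl | rfl <;> rcases hb with rfl | rfl | rfl <;> simp at hx ⊢
  · rintro (h | h | h | h | h | h) <;> subst h
    · exact ⟨⟨q1, 0, by simp, by ring⟩, z1⟩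
    · exact ⟨⟨q1 + q2, q1, by simp, by ring⟩, z2⟩
    · exact ⟨⟨0, q1 + q2, by simp, by ring⟩, z3⟩
    · exact ⟨⟨0, q1, by simp, by ring⟩, neg_ne_zero.2 z1⟩
    · exact ⟨⟨q1, q1 + q2, by simp, by ring⟩, neg_ne_zero.2 z2⟩
    · exact ⟨⟨q1 + q2, 0, by simp, by ring⟩, neg_ne_zero.2 z3⟩

lemma card_ge_of_list {S : Finset ℕ} (l : List ℕ) (h : l.Nodup) (hs : ∀ x ∈ l, x ∈ S) :
    l.length ≤ S.card := by
  rw [← List.toFinset_card_of_nodup h]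
  exact Finset.card_le_card (fun x hx => hs x (by simpa using hx))

set_option maxHeartbeats 4000000 in
theorem dplus_card_nonequidiff_qu_large (L q1 q2 q3 ql qm qu : ℕ) (hL : Even L)
    (hq1 : 2 ≤ q1) (hq2 : 2 ≤ q2) (hsum : q1 + q2 ≤ L - 2)
    (hq3 : q3 = L - q1 - q2)
    (hperm : ({q1, q2, q3} : Multiset ℕ) = {ql, qm, qu})
    (hlm : ql < qm) (hmu : qm < qu)
    (I : Finset (ZMod L)) (hI : I = {0, (q1 : ZMod L), ((q1 + q2 : ℕ) : ZMod L)})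
    (hqu : L / 2 ≤ qu) :
    (qm = ql + 1 ∧ 4 * qm = L + 2 ∧ 2 * qu = L → (dplus I).card = 8) ∧
    (¬ (qm = ql + 1 ∧ 4 * qm = L + 2 ∧ 2 * qu = L) → 10 ≤ (dplus I).card) := by
  have hq3' : 2 ≤ q3 := by omega
  have hs : q1 + q2 + q3 = L := by omega
  have hD := dstar_aux L q1 q2 q3 hq1 hq2 hq3' hs
  rw [← hI, hperm] at hD
  have hs' : ql + qm + qu = L := by
    have := congrArg Multiset.sum hperm
    simp at this
    omega
  have hl2 : 2 ≤ ql := by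
    have : ql ∈ ({q1, q2, q3} : Multiset ℕ) := by rw [hperm]; simp
    simp at this
    omega
  have hP : dplus I = ({ql, qm, qu, L - ql, L - qm, L - qu, ql + 1, qm + 1, qu + 1,
      L - ql + 1, L - qm + 1, L - qu + 1} : Finset ℕ).image (fun n : ℕ => (n : ZMod L)) := by
    rw [dplus, hD]
    simp [Finset.image_union, Finset.image_insert]
    ext x
    simp only [Finset.mem_insert, Finset.mem_singleton, Finset.mem_union]
    tauto
  have hc : (dplus I).card = ({ql, qm, qu, L - ql, L - qm, L - qu, ql + 1, qm + 1, qu + 1,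
      L - ql + 1, L - qm + 1, L - qu + 1} : Finset ℕ).card := by
    rw [hP]
    apply Finset.card_image_of_injOn
    have hb : ∀ x ∈ ({ql, qm, qu, L - ql, L - qm, L - qu, ql + 1, qm + 1, qu + 1,
      L - ql + 1, L - qm + 1, L - qu + 1} : Finset ℕ), x < L := by
      intro x hx
      simp only [Finset.mem_insert, Finset.mem_singleton] at hx
      omega
    intro x hx y hy hxy
    have hx' := hb x hx
    have hy' := hb y hy
    have := (ZMod.natCast_eq_natCast_iff' x y L).1 hxy
    rwa [Nat.mod_eq_of_lt hx', Nat.mod_eq_of_lt hy'] at this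
  rw [hc]
  obtain ⟨k, hk⟩ := hL
  constructor
  · rintro ⟨h1, h2, h3⟩
    have : ({ql, qm, qu, L - ql, L - qm, L - qu, ql + 1, qm + 1, qu + 1,
      L - ql + 1, L - qm + 1, L - qu + 1} : Finset ℕ) =
      [ql, ql + 1, ql + 2, qu, qu + 1, L - ql - 1, L - ql, L - ql + 1].toFinset := by
      ext x
      simp only [Finset.mem_insert, Finset.mem_singleton, List.mem_toFinset, List.mem_cons,
        List.not_mem_nil, or_false]
      omega
    rw [this, List.toFinset_card_of_nodup]
    · rfl
    · simp only [List.nodup_cons, List.mem_cons, List.not_mem_nil, or_false, not_false_eq_true,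
        List.nodup_nil, and_true]
      omega
  · intro hn
    by_cases h1 : qm = ql + 1
    · refine card_ge_of_list [ql, ql + 1, ql + 2, L - qu, L - qu + 1, qu, qu + 1, L - ql - 1,
        L - ql, L - ql + 1] ?_ ?_
      · simp only [List.nodup_cons, List.mem_cons, List.not_mem_nil, or_false, not_false_eq_true,
          List.nodup_nil, and_true]
        omega
      · intro x hx
        simp only [Finset.mem_insert, Finset.mem_singleton, List.mem_cons,
          List.not_mem_nil, or_false] at hx ⊢
        clear hc hP hD hperm hI
        rcases hx with h | h | h | h | h | h | h | h | h | h <;> omega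
    · refine card_ge_of_list [ql, ql + 1, qm, qm + 1, qu, qu + 1, L - qm, L - qm + 1,
        L - ql, L - ql + 1] ?_ ?_
      · simp only [List.nodup_cons, List.mem_cons, List.not_mem_nil, or_false, not_false_eq_true,
          List.nodup_nil, and_true]
        omega
      · intro x hx
        simp only [Finset.mem_insert, Finset.mem_singleton, List.mem_cons,
          List.not_mem_nil, or_false] at hx ⊢
        clear hc hP hD hperm hI
        rcases hx with h | h | h | h | h | h | h | h | h | h <;> omega
end

section
/- Let L be an even integer and let q1, q2 ≥ 2 be integers with q1 + q2 ≤ L − 2; set q3 = L − q1 − q2, suppose q1, q2, q3 are pairwise distinct, and let q_l < q_m < q_u be the increasing rearrangement of q1, q2, q3. Let I = {0, q1, q1 + q2} ⊆ Z_L. If |d⁺(I)| < 10 and d⁺(I) has at least one rough tube, then q_m = q_l + 1 = (L + 2)/4 and q_u = L/2. -/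
open Finset

/-- `d⁺(I)` viewed as a set of natural numbers in `{0,…,L-1}`. -/
def dplusN {L : ℕ} (I : Finset (ZMod L)) : Finset ℕ := (dplus I).image ZMod.val

/-- `T(x,y)` is a tube of `A`: a maximal interval of consecutive integers contained in `A`. -/
def IsTube (A : Finset ℕ) (x y : ℕ) : Prop :=
  x ≤ y ∧ (∀ z ∈ Finset.Icc x y, z ∈ A) ∧ (x - 1) ∉ A ∧ (y + 1) ∉ A


lemma card_ten (A : Finset ℕ) (a b c d e f g h i j : ℕ) (h1 : a < b) (h2 : b < c) (h3 : c < d)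
    (h4 : d < e) (h5 : e < f) (h6 : f < g) (h7 : g < h) (h8 : h < i) (h9 : i < j)
    (hA : ∀ z, (z = a ∨ z = b ∨ z = c ∨ z = d ∨ z = e ∨ z = f ∨ z = g ∨ z = h ∨ z = i ∨ z = j) →
      z ∈ A) : 10 ≤ A.card := by
  have hs : ({a, b, c, d, e, f, g, h, i, j} : Finset ℕ) ⊆ A := by
    intro z hz
    simp only [Finset.mem_insert, Finset.mem_singleton] at hz
    exact hA z hz
  have := Finset.card_le_card hs
  repeat rw [Finset.card_insert_of_notMem
    (by simp only [Finset.mem_insert, Finset.mem_singleton]; omega)] at this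
  simpa using this

lemma arith_core (L ql qm qu : ℕ) (hL : Even L) (h2 : 2 ≤ ql) (hlm : ql < qm) (hmu : qm < qu)
    (hs : ql + qm + qu = L) (A : Finset ℕ)
    (hA : ∀ z, z ∈ A ↔ (z = ql ∨ z = qm ∨ z = qu ∨ z + ql = L ∨ z + qm = L ∨ z + qu = L ∨
      z = ql + 1 ∨ z = qm + 1 ∨ z = qu + 1 ∨ z + ql = L + 1 ∨ z + qm = L + 1 ∨ z + qu = L + 1))
    (hcard : A.card < 10)
    (htube : ∃ x y, IsTube A x y ∧ ((Even x ∧ Even y) ∨ (Odd x ∧ Odd y))) :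
    qm = ql + 1 ∧ 4 * qm = L + 2 ∧ 2 * qu = L := by
  obtain ⟨k, hk⟩ := hL
  by_cases hu : 2 * qu = L
  · by_cases hm : qm = ql + 1
    · omega
    · exfalso
      have := card_ten A ql (ql+1) qm (qm+1) qu (qu+1) (L-qm) (L-qm+1) (L-ql) (L-ql+1)
        (by omega) (by omega) (by omega) (by omega) (by omega) (by omega) (by omega)
        (by omega) (by omega) (by intro z hz; rw [hA]; omega)
      omega
  exfalso
  obtain ⟨a, b, hab, hlt, hq⟩ : ∃ a b, a + b = L ∧ a < b ∧ ((a = qu ∧ b = L - qu) ∨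
      (b = qu ∧ a = L - qu)) := by
    rcases lt_or_gt_of_ne hu with h | h
    · exact ⟨qu, L - qu, by omega, by omega, by omega⟩
    · exact ⟨L - qu, qu, by omega, by omega, by omega⟩
  by_cases hm : qm = ql + 1
  · by_cases ha : a = qm + 1
    · obtain ⟨x, y, ⟨hxy, hin, hx, hy⟩, hpar⟩ := htube
      have hqu : qu = ql + 2 := by omega
      have hLL : L = 3 * ql + 3 := by omega
      have hB : ∀ z, z ∈ A ↔ ((ql ≤ z ∧ z ≤ ql + 3) ∨ (2 * ql + 1 ≤ z ∧ z ≤ 2 * ql + 4)) := by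
        intro z
        rw [hA, hm, hqu, hLL]
        clear hA hin hx hy hpar
        constructor
        · rintro (h | h | h | h | h | h | h | h | h | h | h | h) <;> omega
        · intro h
          omega
      have h1 := (hB x).1 (hin x (by simp [hxy]))
      have h2' := (hB y).1 (hin y (by simp [hxy]))
      rw [hB] at hx hy
      clear hA hB hin
      have hax : x = ql ∨ x = 2 * ql + 1 := by omega
      have hay : y = ql + 3 ∨ y = 2 * ql + 4 := by omega
      have hp : x % 2 = y % 2 := by
        rcases hpar with ⟨h, h'⟩ | ⟨h, h'⟩
        · rw [Nat.even_iff] at h h'; omega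
        · rw [Nat.odd_iff] at h h'; omega
      omega
    · have := card_ten A ql qm (qm+1) a (a+1) b (b+1) (L-qm) (L-ql) (L-ql+1)
        (by omega) (by omega) (by omega) (by omega) (by omega) (by omega) (by omega)
        (by omega) (by omega) (by intro z hz; rw [hA]; omega)
      omega
  · have := card_ten A ql (ql+1) qm (qm+1) (a+1) b (L-qm) (L-qm+1) (L-ql) (L-ql+1)
      (by omega) (by omega) (by omega) (by omega) (by omega) (by omega) (by omega)
      (by omega) (by omega) (by intro z hz; rw [hA]; omega)
    omega

lemma dstar_eq (L q1 q2 q3 : ℕ) (h1 : 2 ≤ q1) (h2 : 2 ≤ q2) (h3 : 2 ≤ q3) (hs : q1 + q2 + q3 = L) :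
    dstar ({0, (q1 : ZMod L), ((q1 + q2 : ℕ) : ZMod L)} : Finset (ZMod L)) =
      ({q1, q2, q3, L - q1, L - q2, L - q3} : Finset ℕ).image (Nat.cast : ℕ → ZMod L) := by
  have hz : ∀ n : ℕ, 0 < n → n < L → (n : ZMod L) ≠ 0 := by
    intro n hn hnL h
    rw [ZMod.natCast_eq_zero_iff] at h
    exact absurd (Nat.le_of_dvd hn h) (by omega)
  have hL0 : (q1 : ZMod L) + q2 + q3 = 0 := by
    have := ZMod.natCast_self L
    rw [← this, ← hs]; push_cast; rfl
  have e1 : ((L - q1 : ℕ) : ZMod L) = - q1 := by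
    rw [Nat.cast_sub (by omega), ZMod.natCast_self, zero_sub]
  have e2 : ((L - q2 : ℕ) : ZMod L) = - q2 := by
    rw [Nat.cast_sub (by omega), ZMod.natCast_self, zero_sub]
  have e3 : ((L - q3 : ℕ) : ZMod L) = - q3 := by
    rw [Nat.cast_sub (by omega), ZMod.natCast_self, zero_sub]
  have n1 := hz q1 (by omega) (by omega)
  have n2 := hz q2 (by omega) (by omega)
  have n3 := hz q3 (by omega) (by omega)
  have e4 : (q1 : ZMod L) + q2 = - q3 := by linear_combination hL0
  have e5 : (q1 : ZMod L) - (- q3) = - q2 := by linear_combination hL0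
  have e6 : -(q3 : ZMod L) - q1 = q2 := by linear_combination -hL0
  ext z
  simp only [dstar, dset, Finset.mem_sdiff, Finset.mem_image, Finset.mem_product,
    Finset.mem_insert, Finset.mem_singleton, Prod.exists, Nat.cast_add, e4]
  constructor
  · rintro ⟨⟨a, b, ⟨ha, hb⟩, rfl⟩, hne⟩
    rcases ha with rfl | rfl | rfl <;> rcases hb with rfl | rfl | rfl
    · simp at hne
    · exact ⟨L - q1, by simp, by rw [e1]; ring⟩
    · exact ⟨q3, by simp, by ring⟩
    · exact ⟨q1, by simp, by ring⟩
    · simp at hne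
    · exact ⟨L - q2, by simp, by rw [e2, e5]⟩
    · exact ⟨L - q3, by simp, by rw [e3]; ring⟩
    · exact ⟨q2, by simp, by rw [e6]⟩
    · simp at hne
  · rintro ⟨n, hn, rfl⟩
    refine ⟨?_, hz n (by omega) (by omega)⟩
    rcases hn with rfl | rfl | rfl | rfl | rfl | rfl
    · exact ⟨_, 0, ⟨Or.inr (Or.inl rfl), Or.inl rfl⟩, by ring⟩
    · exact ⟨_, _, ⟨Or.inr (Or.inr rfl), Or.inr (Or.inl rfl)⟩, e6⟩
    · exact ⟨0, _, ⟨Or.inl rfl, Or.inr (Or.inr rfl)⟩, by ring⟩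
    · exact ⟨0, _, ⟨Or.inl rfl, Or.inr (Or.inl rfl)⟩, by rw [e1]; ring⟩
    · exact ⟨_, _, ⟨Or.inr (Or.inl rfl), Or.inr (Or.inr rfl)⟩, by rw [e2, e5]⟩
    · exact ⟨_, 0, ⟨Or.inr (Or.inr rfl), Or.inl rfl⟩, by rw [e3]; ring⟩

lemma mem_dplusN (L q1 q2 q3 : ℕ) (h1 : 2 ≤ q1) (h2 : 2 ≤ q2) (h3 : 2 ≤ q3)
    (hs : q1 + q2 + q3 = L) (z : ℕ) :
    z ∈ dplusN ({0, (q1 : ZMod L), ((q1 + q2 : ℕ) : ZMod L)} : Finset (ZMod L)) ↔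
      (z = q1 ∨ z = q2 ∨ z = q3 ∨ z + q1 = L ∨ z + q2 = L ∨ z + q3 = L ∨
      z = q1 + 1 ∨ z = q2 + 1 ∨ z = q3 + 1 ∨ z + q1 = L + 1 ∨ z + q2 = L + 1 ∨ z + q3 = L + 1) := by
  have key : z ∈ dplusN ({0, (q1 : ZMod L), ((q1 + q2 : ℕ) : ZMod L)} : Finset (ZMod L)) ↔
      ∃ n ∈ ({q1, q2, q3, L - q1, L - q2, L - q3} : Finset ℕ), z = n ∨ z = n + 1 := by
    have hv : ∀ n ∈ ({q1, q2, q3, L - q1, L - q2, L - q3} : Finset ℕ), n + 1 < L := by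
      intro n hn
      simp only [Finset.mem_insert, Finset.mem_singleton] at hn
      omega
    rw [dplusN, dplus, dstar_eq L q1 q2 q3 h1 h2 h3 hs]
    generalize ({q1, q2, q3, L - q1, L - q2, L - q3} : Finset ℕ) = S at hv
    simp only [Finset.mem_image, Finset.mem_union]
    constructor
    · rintro ⟨w, ⟨n, hn, rfl⟩ | ⟨_, ⟨n, hn, rfl⟩, rfl⟩, rfl⟩
      · exact ⟨n, hn, Or.inl (ZMod.val_cast_of_lt (by have := hv n hn; omega))⟩
      · refine ⟨n, hn, Or.inr ?_⟩
        rw [← Nat.cast_succ]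
        exact ZMod.val_cast_of_lt (hv n hn)
    · rintro ⟨n, hn, rfl | rfl⟩
      · exact ⟨_, Or.inl ⟨_, hn, rfl⟩, ZMod.val_cast_of_lt (by have := hv z hn; omega)⟩
      · refine ⟨_, Or.inr ⟨_, ⟨n, hn, rfl⟩, rfl⟩, ?_⟩
        rw [← Nat.cast_succ]
        exact ZMod.val_cast_of_lt (hv n hn)
  rw [key]
  simp only [Finset.mem_insert, Finset.mem_singleton, exists_eq_or_imp, exists_eq_left]
  omega

theorem nonequidiff_rough_tube (L q1 q2 q3 ql qm qu : ℕ) (hL : Even L)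
    (hq1 : 2 ≤ q1) (hq2 : 2 ≤ q2) (hsum : q1 + q2 ≤ L - 2)
    (hq3 : q3 = L - q1 - q2)
    (hperm : ({q1, q2, q3} : Multiset ℕ) = {ql, qm, qu})
    (hlm : ql < qm) (hmu : qm < qu)
    (I : Finset (ZMod L)) (hI : I = {0, (q1 : ZMod L), ((q1 + q2 : ℕ) : ZMod L)})
    (hcard : (dplus I).card < 10)
    (htube : ∃ x y, IsTube (dplusN I) x y ∧ ((Even x ∧ Even y) ∨ (Odd x ∧ Odd y))) :
    qm = ql + 1 ∧ 4 * qm = L + 2 ∧ 2 * qu = L := by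
  have hsumm : q1 + (q2 + q3) = ql + (qm + qu) := by
    have := congrArg Multiset.sum hperm
    simpa using this
  have hmem : ∀ z, (z = q1 ∨ z = q2 ∨ z = q3) ↔ (z = ql ∨ z = qm ∨ z = qu) := by
    intro z
    have : z ∈ ({q1, q2, q3} : Multiset ℕ) ↔ z ∈ ({ql, qm, qu} : Multiset ℕ) := by rw [hperm]
    simpa using this
  have ml := (hmem ql).2 (by simp)
  have mm := (hmem qm).2 (by simp)
  have mu := (hmem qu).2 (by simp)
  have hL' : q1 + q2 + q3 = L := by omega
  refine arith_core L ql qm qu hL (by omega) hlm hmu (by omega) (dplusN I) ?_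
    (lt_of_le_of_lt Finset.card_image_le hcard) htube
  intro z
  rw [hI, mem_dplusN L q1 q2 q3 hq1 hq2 (by omega) hL']
  clear hI hcard htube hperm hmem
  rcases ml with rfl | rfl | rfl <;> rcases mm with rfl | rfl | rfl <;>
    rcases mu with rfl | rfl | rfl <;> first | omega | tauto
end

section
/- Let L be an even integer and let I = {0, g, 2g mod L} ⊆ Z_L be an equi-difference codeword of weight 3 (that is, |I| = 3) with generator g, 2 ≤ g ≤ L/2, such that {1, L−1} ∩ d*(I) = ∅. Call I non-dispersive if there exist distinct elements a, b ∈ d(I) with b ≡ a + 1 (mod L). If I is non-dispersive, then there are exactly two elements x ∈ d*(I) with x + 1 ∈ d*(I) (i.e., exactly two pairs of consecutive elements in d*(I)), and g = (L+1)/3 or g = (L−1)/3. -/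
open Finset

set_option maxHeartbeats 4000000 in
theorem equidiff_nondispersive (L g : ℕ) (hL : Even L) (hg : 2 ≤ g) (hgL : 2 * g ≤ L)
    (I : Finset (ZMod L)) (hI : I = {0, (g : ZMod L), ((2 * g : ℕ) : ZMod L)})
    (hcard : I.card = 3)
    (h1 : (1 : ZMod L) ∉ dstar I) (h2 : (-1 : ZMod L) ∉ dstar I)
    (hnd : ∃ a ∈ dset I, ∃ b ∈ dset I, a ≠ b ∧ b = a + 1) :
    ((dstar I).filter fun x => x + 1 ∈ dstar I).card = 2 ∧
    (3 * g = L + 1 ∨ 3 * g = L - 1) := by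
  obtain ⟨m, hm⟩ := hL
  have hgL' : 2 * g < L := by
    rcases hgL.lt_or_eq with h | h
    · exact h
    · exfalso
      have h0 : ((2 * g : ℕ) : ZMod L) = 0 := by rw [h]; simp
      rw [hI, h0] at hcard
      have : ({0, (g : ZMod L), 0} : Finset (ZMod L)) = {0, (g : ZMod L)} := by
        ext x; simp; tauto
      rw [this] at hcard
      have := Finset.card_le_two (a := (0 : ZMod L)) (b := (g : ZMod L))
      omega
  have key : ∀ c : ℤ, (c : ZMod L) = 0 → -2 * (L : ℤ) < c → c < 2 * L →
      c = 0 ∨ c = L ∨ c = -L := by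
    intro c hc h3 h4
    rw [ZMod.intCast_zmod_eq_zero_iff_dvd] at hc
    obtain ⟨k, rfl⟩ := hc
    have hk1 : k < 2 := by
      by_contra h; push Not at h; nlinarith
    have hk2 : -2 < k := by
      by_contra h; push Not at h; nlinarith
    obtain rfl | rfl | rfl : k = 0 ∨ k = 1 ∨ k = -1 := by omega
    all_goals simp
  have par : ∀ c : ℤ, (c : ZMod L) = 0 → c % 2 = 0 := by
    intro c hc
    rw [ZMod.intCast_zmod_eq_zero_iff_dvd] at hc
    obtain ⟨k, rfl⟩ := hc
    subst hm
    have : ((m + m : ℕ) : ℤ) * k = 2 * (m * k) := by push_cast; ring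
    omega
  have n1 : (1 : ZMod L) ≠ 0 := fun h => by
    have := par 1 (by simpa using h); omega
  have n2 : (2 : ZMod L) ≠ 0 := fun h => by
    have := key 2 (by simpa using h) (by omega) (by omega); omega
  have g1 : (g : ZMod L) ≠ 0 := fun h => by
    have := key g (by simpa using h) (by omega) (by omega); omega
  have g2 : 2 * (g : ZMod L) ≠ 0 := fun h => by
    have := key (2 * g) (by simpa using h) (by omega) (by omega); omega
  have g4 : 4 * (g : ZMod L) ≠ 1 := fun h => by
    have := par (4 * g - 1) (by push_cast; rw [h]; ring); omega
  have g4' : 4 * (g : ZMod L) ≠ -1 := fun h => by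
    have := par (4 * g + 1) (by push_cast; rw [h]; ring); omega
  have g3 : 3 * (g : ZMod L) = 1 → 3 * g = L + 1 := fun h => by
    have := key (3 * g - 1) (by push_cast; rw [h]; ring) (by omega) (by omega); omega
  have g3' : 3 * (g : ZMod L) = -1 → 3 * g = L - 1 := fun h => by
    have := key (3 * g + 1) (by push_cast; rw [h]; ring) (by omega) (by omega); omega
  have mem : ∀ x, x ∈ dset I ↔ (x = 0 ∨ x = g ∨ x = -g ∨ x = 2 * g ∨ x = -(2 * g)) := by
    intro x
    rw [hI]
    simp only [dset, mem_image, mem_product, mem_insert, mem_singleton, Prod.exists]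
    push_cast
    constructor
    · rintro ⟨a, b, ⟨rfl | rfl | rfl, rfl | rfl | rfl⟩, rfl⟩ <;> grind
    · rintro (rfl | rfl | rfl | rfl | rfl)
      · exact ⟨0, 0, by simp, by simp⟩
      · exact ⟨g, 0, by simp, by simp⟩
      · exact ⟨0, g, by simp, by simp⟩
      · exact ⟨2 * g, 0, by simp, by simp⟩
      · exact ⟨0, 2 * g, by simp, by simp⟩
  have mem' : ∀ x, x ∈ dstar I ↔ (x = g ∨ x = -g ∨ x = 2 * g ∨ x = -(2 * g)) := by
    intro x
    simp only [dstar, mem_sdiff, mem, mem_singleton]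
    constructor
    · tauto
    · intro h
      refine ⟨Or.inr h, ?_⟩
      rintro rfl
      grind
  rw [mem'] at h1 h2
  push Not at h1 h2
  generalize (g : ZMod L) = G at *
  obtain ⟨p1, p2, p3, p4⟩ := h1
  obtain ⟨q1, q2, q3, q4⟩ := h2
  have h3 : 3 * G = 1 ∨ 3 * G = -1 := by
    obtain ⟨a, ha, b, hb, -, hab⟩ := hnd
    rw [mem] at ha hb
    clear mem mem' key par g3 g3' hcard hI
    rcases ha with ha | ha | ha | ha | ha <;> rcases hb with hb | hb | hb | hb | hb <;>
      subst ha <;> subst hb <;> grind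
  refine ⟨?_, h3.imp g3 g3'⟩
  rcases h3 with h | h
  · have : ((dstar I).filter fun x => x + 1 ∈ dstar I) = {-(2 * G), -G} := by
      ext x
      simp only [mem_filter, mem', mem_insert, mem_singleton]
      clear mem mem' key par g3 g3' hcard hI hnd
      constructor
      · rintro ⟨hx | hx | hx | hx, hy | hy | hy | hy⟩ <;> subst hx <;> grind
      · rintro (hx | hx) <;> subst hx <;> grind
    rw [this, card_pair]
    grind
  · have : ((dstar I).filter fun x => x + 1 ∈ dstar I) = {G, 2 * G} := by
      ext x
      simp only [mem_filter, mem', mem_insert, mem_singleton]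
      clear mem mem' key par g3 g3' hcard hI hnd
      constructor
      · rintro ⟨hx | hx | hx | hx, hy | hy | hy | hy⟩ <;> subst hx <;> grind
      · rintro (hx | hx) <;> subst hx <;> grind
    rw [this, card_pair]
    grind
end

section
/- Let L ≥ 6 be an even integer and let I = {0, g, 2g mod L} ⊆ Z_L be an equi-difference codeword of weight 3 (that is, |I| = 3) with generator g, 2 ≤ g ≤ L/2, such that {1, L−1} ∩ d*(I) = ∅. Then |d⁺(I)| = 4 if g = L/3; |d⁺(I)| = 6 if g = L/4, g = (L+1)/3, or g = (L−1)/3; and |d⁺(I)| = 8 otherwise. -/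
open Finset

theorem aux_dstar (L g : ℕ) (hg : 2 ≤ g) (hgL : 2 * g < L) :
    dstar ({0, (g : ZMod L), ((2 * g : ℕ) : ZMod L)} : Finset (ZMod L)) =
      ({g, 2 * g, L - g, L - 2 * g} : Finset ℕ).image (fun n : ℕ => (n : ZMod L)) := by
  have e1 : ((L - g : ℕ) : ZMod L) = -(g : ZMod L) := by
    rw [Nat.cast_sub (by omega)]; simp
  have e2 : ((L - 2 * g : ℕ) : ZMod L) = -(2 * (g : ZMod L)) := by
    rw [Nat.cast_sub (by omega)]; simp
  have n1 : (g : ZMod L) ≠ 0 := by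
    rw [Ne, ZMod.natCast_eq_zero_iff]
    exact fun h => absurd (Nat.le_of_dvd (by omega) h) (by omega)
  have n2 : 2 * (g : ZMod L) ≠ 0 := by
    have : ((2 * g : ℕ) : ZMod L) ≠ 0 := by
      rw [Ne, ZMod.natCast_eq_zero_iff]
      exact fun h => absurd (Nat.le_of_dvd (by omega) h) (by omega)
    simpa using this
  have n3 : -(g : ZMod L) ≠ 0 := neg_ne_zero.mpr n1
  have n4 : -(2 * (g : ZMod L)) ≠ 0 := neg_ne_zero.mpr n2
  have i1 : (g : ZMod L) - 2 * g = -g := by ring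
  have i2 : 2 * (g : ZMod L) - g = g := by ring
  ext x
  simp only [dstar, dset, Finset.mem_sdiff, Finset.mem_image, Finset.mem_product,
    Finset.mem_insert, Finset.mem_singleton, Prod.exists]
  constructor
  · rintro ⟨⟨a, b, ⟨ha, hb⟩, rfl⟩, h0⟩
    rcases ha with rfl | rfl | rfl <;> rcases hb with rfl | rfl | rfl <;>
      simp [e1, e2, i1, i2] at h0 ⊢
  · rintro ⟨n, (rfl | rfl | rfl | rfl), rfl⟩
    · exact ⟨⟨_, 0, ⟨Or.inr (Or.inl rfl), Or.inl rfl⟩, by simp⟩, n1⟩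
    · exact ⟨⟨_, 0, ⟨Or.inr (Or.inr rfl), Or.inl rfl⟩, by simp⟩, by simpa using n2⟩
    · exact ⟨⟨0, _, ⟨Or.inl rfl, Or.inr (Or.inl rfl)⟩, by simp [e1]⟩, by rw [e1]; exact n3⟩
    · exact ⟨⟨0, _, ⟨Or.inl rfl, Or.inr (Or.inr rfl)⟩, by simp [e2]⟩, by rw [e2]; exact n4⟩

theorem aux_dplus (L g : ℕ) (hg : 2 ≤ g) (hgL : 2 * g + 1 < L) :
    (dplus ({0, (g : ZMod L), ((2 * g : ℕ) : ZMod L)} : Finset (ZMod L))).card =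
      ({g, 2 * g, L - g, L - 2 * g, g + 1, 2 * g + 1, L - g + 1, L - 2 * g + 1} :
        Finset ℕ).card := by
  have h : dplus ({0, (g : ZMod L), ((2 * g : ℕ) : ZMod L)} : Finset (ZMod L)) =
      ({g, 2 * g, L - g, L - 2 * g, g + 1, 2 * g + 1, L - g + 1, L - 2 * g + 1} :
        Finset ℕ).image (fun n : ℕ => (n : ZMod L)) := by
    rw [dplus, aux_dstar L g hg (by omega)]
    simp only [Finset.image_insert, Finset.image_singleton, Nat.cast_add, Nat.cast_one,
      Finset.insert_union, Finset.singleton_union]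
  rw [h]
  apply Finset.card_image_of_injOn
  intro a ha b hb hab
  have ha' : a < L := by
    simp only [Finset.coe_insert, Finset.coe_singleton, Set.mem_insert_iff,
      Set.mem_singleton_iff] at ha
    omega
  have hb' : b < L := by
    simp only [Finset.coe_insert, Finset.coe_singleton, Set.mem_insert_iff,
      Set.mem_singleton_iff] at hb
    omega
  have := (ZMod.natCast_eq_natCast_iff' a b L).mp hab
  rwa [Nat.mod_eq_of_lt ha', Nat.mod_eq_of_lt hb'] at this

theorem equidiff_dplus_card (L g : ℕ) (hL6 : 6 ≤ L) (hL : Even L)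
    (hg : 2 ≤ g) (hgL : 2 * g ≤ L)
    (I : Finset (ZMod L)) (hI : I = {0, (g : ZMod L), ((2 * g : ℕ) : ZMod L)})
    (hcard : I.card = 3)
    (h1 : (1 : ZMod L) ∉ dstar I) (h2 : (-1 : ZMod L) ∉ dstar I) :
    (3 * g = L → (dplus I).card = 4) ∧
    (4 * g = L ∨ 3 * g = L + 1 ∨ 3 * g = L - 1 → (dplus I).card = 6) ∧
    (¬ (3 * g = L ∨ 4 * g = L ∨ 3 * g = L + 1 ∨ 3 * g = L - 1) → (dplus I).card = 8) := by
  have hlt : 2 * g + 1 < L := by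
    have hne : 2 * g ≠ L := by
      rintro h
      have hz : ((2 * g : ℕ) : ZMod L) = 0 := by rw [h]; simp
      rw [hI, hz] at hcard
      have : ({0, (g : ZMod L), 0} : Finset (ZMod L)) = {0, (g : ZMod L)} := by
        ext x; simp only [Finset.mem_insert, Finset.mem_singleton]; tauto
      rw [this] at hcard
      have := Finset.card_le_two (a := (0 : ZMod L)) (b := (g : ZMod L))
      omega
    obtain ⟨k, hk⟩ := hL
    omega
  obtain ⟨k, hk⟩ := hL
  rw [hI, aux_dplus L g hg hlt]
  refine ⟨fun h => ?_, fun h => ?_, fun h => ?_⟩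
  · · have : ({g, 2 * g, L - g, L - 2 * g, g + 1, 2 * g + 1, L - g + 1, L - 2 * g + 1} :
        Finset ℕ) = {g, 2 * g, g + 1, 2 * g + 1} := by
        ext x
        simp only [Finset.mem_insert, Finset.mem_singleton]
        omega
      rw [this]
      repeat rw [Finset.card_insert_of_notMem (by
        simp only [Finset.mem_insert, Finset.mem_singleton]; omega)]
      rw [Finset.card_singleton]
  · rcases h with h | h | h
    · have : ({g, 2 * g, L - g, L - 2 * g, g + 1, 2 * g + 1, L - g + 1, L - 2 * g + 1} :
        Finset ℕ) = {g, 2 * g, 3 * g, g + 1, 2 * g + 1, 3 * g + 1} := by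
        ext x
        simp only [Finset.mem_insert, Finset.mem_singleton]
        omega
      rw [this]
      repeat rw [Finset.card_insert_of_notMem (by
        simp only [Finset.mem_insert, Finset.mem_singleton]; omega)]
      rw [Finset.card_singleton]
    · have : ({g, 2 * g, L - g, L - 2 * g, g + 1, 2 * g + 1, L - g + 1, L - 2 * g + 1} :
        Finset ℕ) = {g, 2 * g, L - g, L - 2 * g, g + 1, 2 * g + 1} := by
        ext x
        simp only [Finset.mem_insert, Finset.mem_singleton]
        omega
      rw [this]
      repeat rw [Finset.card_insert_of_notMem (by
        simp only [Finset.mem_insert, Finset.mem_singleton]; omega)]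
      rw [Finset.card_singleton]
    · have : ({g, 2 * g, L - g, L - 2 * g, g + 1, 2 * g + 1, L - g + 1, L - 2 * g + 1} :
        Finset ℕ) = {g, 2 * g, g + 1, 2 * g + 1, L - g + 1, L - 2 * g + 1} := by
        ext x
        simp only [Finset.mem_insert, Finset.mem_singleton]
        omega
      rw [this]
      repeat rw [Finset.card_insert_of_notMem (by
        simp only [Finset.mem_insert, Finset.mem_singleton]; omega)]
      rw [Finset.card_singleton]
  · · repeat rw [Finset.card_insert_of_notMem (by
        simp only [Finset.mem_insert, Finset.mem_singleton]; omega)]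
      rw [Finset.card_singleton]
end

section
/- For every even integer L ≥ 18: if L ≡ 0 (mod 12), then M_S(L,3) ≤ ⌊(L+4)/8⌋; if L ≡ 4, 6, or 8 (mod 12), then M_S(L,3) ≤ ⌊(L+2)/8⌋; and if L ≡ 2 or 10 (mod 12), then M_S(L,3) ≤ ⌊L/8⌋. -/
open Finset

/-- A strongly conflict-avoiding code of length `L` and weight `ω`. -/
def IsSCAC (L ω : ℕ) (C : Finset (Finset (ZMod L))) : Prop :=
  (∀ I ∈ C, I.card = ω) ∧
  (∀ I ∈ C, (1 : ZMod L) ∉ dstar I ∧ (-1 : ZMod L) ∉ dstar I) ∧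
  ∀ I ∈ C, ∀ J ∈ C, I ≠ J → Disjoint (dplus I) (dplus J)

/-- `M_S(L,ω)`: the maximum size of an SCAC of length `L` and weight `ω`. -/
noncomputable def MS (L ω : ℕ) : ℕ :=
  sSup {n | ∃ C : Finset (Finset (ZMod L)), IsSCAC L ω C ∧ C.card = n}


section aux
variable {L : ℕ}

lemma two_mul_ne_one (hE : Even L) (x : ZMod L) : 2 * x ≠ 1 := by
  intro h
  have h2 : (2:ℕ) ∣ L := hE.two_dvd
  have := congrArg (ZMod.castHom h2 (ZMod 2)) h
  rw [map_mul, map_one, map_ofNat] at this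
  revert this
  generalize (ZMod.castHom h2 (ZMod 2)) x = y
  revert y
  decide

lemma val_mul_zero [NeZero L] (n : ℕ) (x : ZMod L) (h : (n : ZMod L) * x = 0) :
    L ∣ n * x.val := by
  rw [← ZMod.natCast_eq_zero_iff]
  push_cast
  rw [ZMod.natCast_zmod_val]
  exact h

lemma unique_two [NeZero L] (x y : ZMod L) (hx : x ≠ 0) (hy : y ≠ 0)
    (h2x : 2 * x = 0) (h2y : 2 * y = 0) : x = y := by
  apply ZMod.val_injective
  have hx' : x.val ≠ 0 := by rwa [Ne, ZMod.val_eq_zero]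
  have hy' : y.val ≠ 0 := by rwa [Ne, ZMod.val_eq_zero]
  obtain ⟨k, hk⟩ := val_mul_zero 2 x (by exact_mod_cast h2x)
  obtain ⟨l, hl⟩ := val_mul_zero 2 y (by exact_mod_cast h2y)
  have h1 := ZMod.val_lt x
  have h2 := ZMod.val_lt y
  have k1 : k = 1 := by
    have : k < 2 := by by_contra! h; nlinarith
    interval_cases k <;> omega
  have l1 : l = 1 := by
    have : l < 2 := by by_contra! h; nlinarith
    interval_cases l <;> omega
  subst k1 l1
  omega

lemma three_zero [NeZero L] (x : ZMod L) (hx : x ≠ 0) (h : 3 * x = 0) :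
    3 ∣ L ∧ (x.val = L / 3 ∨ x.val = 2 * (L / 3)) := by
  have hx' : x.val ≠ 0 := by rwa [Ne, ZMod.val_eq_zero]
  obtain ⟨k, hk⟩ := val_mul_zero 3 x (by exact_mod_cast h)
  have h1 := ZMod.val_lt x
  have : k < 3 := by by_contra! h; nlinarith
  interval_cases k <;> omega

lemma unique_three [NeZero L] (x y : ZMod L) (hx : x ≠ 0) (hy : y ≠ 0)
    (h2x : 3 * x = 0) (h2y : 3 * y = 0) : y = x ∨ y = -x := by
  obtain ⟨⟨m, hm⟩, hx1⟩ := three_zero x hx h2x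
  obtain ⟨-, hy1⟩ := three_zero y hy h2y
  have hcast : ((x.val + y.val : ℕ) : ZMod L) = x + y := by
    push_cast; simp
  by_cases h : y.val = x.val
  · left; exact ZMod.val_injective _ h
  · right
    have : x.val + y.val = L := by omega
    rw [this, ZMod.natCast_self] at hcast
    linear_combination -hcast

lemma unique_four [NeZero L] (x y : ZMod L) (hx : 2 * x ≠ 0) (hy : 2 * y ≠ 0)
    (h2x : 4 * x = 0) (h2y : 4 * y = 0) : y = x ∨ y = -x := by
  have h := unique_two (2 * x) (2 * y) hx hy (by linear_combination h2x) (by linear_combination h2y)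
  by_cases hd : x - y = 0
  · left; linear_combination -hd
  · right
    have := unique_two (x - y) (2 * x) hd hx (by linear_combination h) (by linear_combination h2x)
    linear_combination -this

lemma four_dvd [NeZero L] (hE : Even L) (x : ZMod L) (hx : 2 * x ≠ 0) (h : 4 * x = 0) : 4 ∣ L := by
  obtain ⟨k, hk⟩ := val_mul_zero 4 x (by exact_mod_cast h)
  have h1 := ZMod.val_lt x
  have h0 : x.val ≠ 0 := by
    intro h; rw [ZMod.val_eq_zero] at h; simp [h] at hx
  have h2 : 2 * x.val ≠ L := by
    intro h
    apply hx
    have : ((2 * x.val : ℕ) : ZMod L) = 2 * x := by push_cast; simp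
    rw [← this, h, ZMod.natCast_self]
  have : k < 4 := by by_contra! h; nlinarith
  obtain ⟨m, hm⟩ := hE
  interval_cases k <;> omega

lemma not_three_dvd (x : ZMod L) (h : 3 * x = 1) : ¬ 3 ∣ L := by
  intro h2
  have := congrArg (ZMod.castHom h2 (ZMod 3)) h
  rw [map_mul, map_one, map_ofNat] at this
  revert this
  generalize (ZMod.castHom h2 (ZMod 3)) x = y
  revert y
  decide

/-- growth of a symmetric set -/
lemma grow [NeZero L] (hE : Even L) (S : Finset (ZMod L)) (hne : S.Nonempty)
    (h0 : (0 : ZMod L) ∉ S) (hs : ∀ x ∈ S, -x ∈ S) :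
    S.card < (S ∪ S.image (· + 1)).card ∧ Even (S ∪ S.image (· + 1)).card := by
  constructor
  · apply Finset.card_lt_card
    refine ⟨Finset.subset_union_left, fun h => ?_⟩
    obtain ⟨x, hx⟩ := hne
    have key : ∀ n : ℕ, x + n ∈ S := by
      intro n
      induction n with
      | zero => simpa using hx
      | succ n ih =>
        apply h
        apply Finset.mem_union_right
        rw [Finset.mem_image]
        exact ⟨_, ih, by push_cast; ring⟩
    apply h0
    have := key (-x).val
    simpa using this
  · have : ((S ∪ S.image (· + 1)).card : ZMod 2) = 0 := by
      have h := Finset.sum_involution (s := S ∪ S.image (· + 1)) (f := fun _ => (1 : ZMod 2))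
        (fun a _ => 1 - a) (fun _ _ => by decide)
        (fun a _ _ h => two_mul_ne_one hE a (by linear_combination -h))
        (fun a ha => by
          rw [Finset.mem_union, Finset.mem_image] at ha ⊢
          rcases ha with ha | ⟨b, hb, rfl⟩
          · right; exact ⟨-a, hs a ha, by ring⟩
          · left
            have := hs b hb
            have e : 1 - (b + 1) = -b := by ring
            rw [e]; exact this)
        (fun a _ => by ring)
      simpa using h
    exact (ZMod.natCast_eq_zero_iff_even).1 this

/-- the core counting lemma -/
lemma core_half [NeZero L] (hE : Even L) (a h : ZMod L) (S : Finset (ZMod L))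
    (ha : a ≠ 0) (hh : h ≠ 0) (hah : a ≠ h) (h2 : 2 * h = 0)
    (hS : S = {a, -a, h - a, h + a, h}) (h1 : (1 : ZMod L) ∉ S) (h1' : (-1 : ZMod L) ∉ S) :
    6 ≤ (S ∪ S.image (· + 1)).card ∧
      (2 * a ≠ h → 8 ≤ (S ∪ S.image (· + 1)).card) := by
  have h2a : 2 * a ≠ 0 := fun e => hah (unique_two a h ha hh e h2)
  set S' : Finset (ZMod L) := {a, -a, h - a, h + a} with hS'
  have hg := grow hE S' ⟨a, by simp [hS']⟩ (by
      simp only [hS', Finset.mem_insert, Finset.mem_singleton]; grind)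
    (by
      simp only [hS', Finset.mem_insert, Finset.mem_singleton]; grind)
  have hone : (1 : ZMod L) ≠ 0 := by
    intro e; apply ha; linear_combination a * e
  simp only [hS, Finset.mem_insert, Finset.mem_singleton, not_or] at h1 h1'
  have hTT : S ∪ S.image (· + 1) = insert h (insert (h + 1) (S' ∪ S'.image (· + 1))) := by
    ext x
    simp only [hS, hS', Finset.mem_union, Finset.mem_image, Finset.mem_insert, Finset.mem_singleton]
    grind
  have hc : (S ∪ S.image (· + 1)).card = (S' ∪ S'.image (· + 1)).card + 2 := by
    rw [hTT, Finset.card_insert_of_notMem, Finset.card_insert_of_notMem]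
    · simp only [hS', Finset.mem_union, Finset.mem_image, Finset.mem_insert, Finset.mem_singleton]
      grind
    · simp only [hS', Finset.mem_union, Finset.mem_image, Finset.mem_insert, Finset.mem_singleton]
      grind
  rw [hc]
  obtain ⟨hg1, k, hg2⟩ := hg
  constructor
  · have : ({a, -a} : Finset (ZMod L)).card ≤ S'.card := by
      apply Finset.card_le_card
      intro x; simp only [hS', Finset.mem_insert, Finset.mem_singleton]; tauto
    rw [Finset.card_pair (by grind)] at this
    omega
  · intro hne
    have : S'.card = 4 := by
      rw [hS', Finset.card_insert_of_notMem, Finset.card_insert_of_notMem, Finset.card_pair]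
      · grind
      · simp only [Finset.mem_insert, Finset.mem_singleton]; grind
      · simp only [Finset.mem_insert, Finset.mem_singleton]; grind
    omega


lemma core_eq [NeZero L] (hE : Even L) (a : ZMod L) (S : Finset (ZMod L))
    (ha : a ≠ 0) (h2a : 2 * a ≠ 0)
    (hS : S = {a, -a, 2 * a, -(2 * a)}) (h1 : (1 : ZMod L) ∉ S) (h1' : (-1 : ZMod L) ∉ S)
    (h4 : 4 * a ≠ 0) :
    4 ≤ (S ∪ S.image (· + 1)).card ∧
      (3 * a ≠ 0 → 6 ≤ (S ∪ S.image (· + 1)).card ∧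
      (3 * a ≠ 1 → 3 * a ≠ -1 → 8 ≤ (S ∪ S.image (· + 1)).card)) := by
  have hg := grow hE S ⟨a, by simp [hS]⟩ (by
      simp only [hS, Finset.mem_insert, Finset.mem_singleton]; grind)
    (by
      simp only [hS, Finset.mem_insert, Finset.mem_singleton]; grind)
  have hone : (1 : ZMod L) ≠ 0 := by
    intro e; apply ha; linear_combination a * e
  obtain ⟨hg1, k, hg2⟩ := hg
  refine ⟨?_, fun h3 => ⟨?_, fun h31 h32 => ?_⟩⟩
  · have : ({a, -a} : Finset (ZMod L)).card ≤ S.card := by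
      apply Finset.card_le_card
      intro x; simp only [hS, Finset.mem_insert, Finset.mem_singleton]; tauto
    rw [Finset.card_pair (by grind)] at this
    omega
  · have : S.card = 4 := by
      rw [hS, Finset.card_insert_of_notMem, Finset.card_insert_of_notMem, Finset.card_pair]
      · grind
      · simp only [Finset.mem_insert, Finset.mem_singleton]; grind
      · simp only [Finset.mem_insert, Finset.mem_singleton]; grind
    omega
  · have hc : S.card = 4 := by
      rw [hS, Finset.card_insert_of_notMem, Finset.card_insert_of_notMem, Finset.card_pair]
      · grind
      · simp only [Finset.mem_insert, Finset.mem_singleton]; grind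
      · simp only [Finset.mem_insert, Finset.mem_singleton]; grind
    have p1 := two_mul_ne_one hE a
    have p2 := two_mul_ne_one hE (-a)
    have p3 := two_mul_ne_one hE (2 * a)
    have p4 := two_mul_ne_one hE (-(2 * a))
    simp only [hS, Finset.mem_insert, Finset.mem_singleton, not_or] at h1 h1'
    have hd : Disjoint S (S.image (· + 1)) := by
      rw [Finset.disjoint_left]
      intro x hx hx'
      rw [Finset.mem_image] at hx'
      obtain ⟨y, hy, rfl⟩ := hx'
      simp only [hS, Finset.mem_insert, Finset.mem_singleton] at hx hy
      rcases hy with rfl | rfl | rfl | rfl <;> rcases hx with hx | hx | hx | hx <;> grind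
    rw [Finset.card_union_of_disjoint hd, Finset.card_image_of_injective _ (add_left_injective 1)]
    omega

def P3 (S : Finset (ZMod L)) : Prop := ∃ x ∈ S, x ≠ 0 ∧ 3 * x = 0
def P4 (S : Finset (ZMod L)) : Prop := ∃ x ∈ S, 2 * x ≠ 0 ∧ 4 * x = 0
def Pu (S : Finset (ZMod L)) : Prop := ∃ x ∈ S, 3 * x = 1

def Good (S : Finset (ZMod L)) : Prop :=
  8 ≤ (S ∪ S.image (· + 1)).card ∨ (6 ≤ (S ∪ S.image (· + 1)).card ∧ (P4 S ∨ Pu S)) ∨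
  (4 ≤ (S ∪ S.image (· + 1)).card ∧ P3 S)

lemma good_half [NeZero L] (hE : Even L) (a b c : ZMod L) (S : Finset (ZMod L))
    (habc : a + b + c = 0) (ha : a ≠ 0) (hb : b ≠ 0) (hc : c ≠ 0)
    (hS : S = {a, -a, b, -b, c, -c}) (h1 : (1 : ZMod L) ∉ S) (h1' : (-1 : ZMod L) ∉ S)
    (h2 : 2 * c = 0) : Good S := by
  have := core_half hE a c S ha hc (by grind) h2 (by
    rw [hS]; ext x; simp only [Finset.mem_insert, Finset.mem_singleton]; grind) h1 h1'
  by_cases h : 2 * a = c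
  · right; left
    exact ⟨this.1, Or.inl ⟨a, by simp [hS], by grind, by grind⟩⟩
  · left; exact this.2 h

lemma good_eq [NeZero L] (hE : Even L) (a b c : ZMod L) (S : Finset (ZMod L))
    (habc : a + b + c = 0) (ha : a ≠ 0) (hc : c ≠ 0)
    (hS : S = {a, -a, b, -b, c, -c}) (h1 : (1 : ZMod L) ∉ S) (h1' : (-1 : ZMod L) ∉ S)
    (h2 : 2 * c ≠ 0) (h : a = b) : Good S := by
  subst h
  have := core_eq hE a S ha (by grind) (by
    rw [hS]; ext x; simp only [Finset.mem_insert, Finset.mem_singleton]; grind) h1 h1' (by grind)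
  by_cases h3 : 3 * a = 0
  · exact Or.inr (Or.inr ⟨this.1, a, by simp [hS], ha, h3⟩)
  · by_cases h31 : 3 * a = 1
    · exact Or.inr (Or.inl ⟨(this.2 h3).1, Or.inr ⟨a, by simp [hS], h31⟩⟩)
    · by_cases h32 : 3 * a = -1
      · exact Or.inr (Or.inl ⟨(this.2 h3).1, Or.inr ⟨-a, by simp [hS], by grind⟩⟩)
      · exact Or.inl ((this.2 h3).2 h31 h32)

lemma good [NeZero L] (hE : Even L) (a b c : ZMod L) (S : Finset (ZMod L))
    (habc : a + b + c = 0) (ha : a ≠ 0) (hb : b ≠ 0) (hc : c ≠ 0)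
    (hS : S = {a, -a, b, -b, c, -c}) (h1 : (1 : ZMod L) ∉ S) (h1' : (-1 : ZMod L) ∉ S) :
    Good S := by
  have hS1 : S = {b, -b, c, -c, a, -a} := by
    rw [hS]; ext x; simp only [Finset.mem_insert, Finset.mem_singleton]; tauto
  have hS2 : S = {c, -c, a, -a, b, -b} := by
    rw [hS]; ext x; simp only [Finset.mem_insert, Finset.mem_singleton]; tauto
  by_cases ta : 2 * a = 0
  · exact good_half hE b c a S (by grind) hb hc ha hS1 h1 h1' ta
  by_cases tb : 2 * b = 0
  · exact good_half hE c a b S (by grind) hc ha hb hS2 h1 h1' tb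
  by_cases tc : 2 * c = 0
  · exact good_half hE a b c S (by grind) ha hb hc hS h1 h1' tc
  by_cases eab : a = b
  · exact good_eq hE a b c S (by grind) ha hc hS h1 h1' tc eab
  by_cases ebc : b = c
  · exact good_eq hE b c a S (by grind) hb ha hS1 h1 h1' ta ebc
  by_cases eca : c = a
  · exact good_eq hE c a b S (by grind) hc hb hS2 h1 h1' tb eca
  left
  obtain ⟨hg1, k, hg2⟩ := grow hE S ⟨a, by simp [hS]⟩ (by
      simp only [hS, Finset.mem_insert, Finset.mem_singleton]; grind)
    (by
      simp only [hS, Finset.mem_insert, Finset.mem_singleton]; grind)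
  have : S.card = 6 := by
    rw [hS, Finset.card_insert_of_notMem, Finset.card_insert_of_notMem,
      Finset.card_insert_of_notMem, Finset.card_insert_of_notMem, Finset.card_pair]
    · grind
    all_goals simp only [Finset.mem_insert, Finset.mem_singleton]; grind
  omega

lemma good_code [NeZero L] (hE : Even L) (I : Finset (ZMod L)) (hI : I.card = 3)
    (h1 : (1 : ZMod L) ∉ dstar I) (h1' : (-1 : ZMod L) ∉ dstar I) : Good (dstar I) := by
  obtain ⟨x, y, z, hxy, hxz, hyz, rfl⟩ := Finset.card_eq_three.1 hI
  refine good hE (x - y) (y - z) (z - x) _ (by ring) (by grind) (by grind) (by grind) ?_ h1 h1'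
  ext t
  simp only [dstar, dset, Finset.mem_sdiff, Finset.mem_image, Finset.mem_product,
    Finset.mem_insert, Finset.mem_singleton, Prod.exists]
  constructor
  · rintro ⟨⟨p, q, ⟨hp, hq⟩, rfl⟩, h0⟩
    rcases hp with rfl | rfl | rfl <;> rcases hq with rfl | rfl | rfl <;> simp at h0 ⊢
  · rintro (rfl | rfl | rfl | rfl | rfl | rfl)
    · exact ⟨⟨x, y, by simp⟩, by grind⟩
    · exact ⟨⟨y, x, by simp⟩, by grind⟩
    · exact ⟨⟨y, z, by simp⟩, by grind⟩
    · exact ⟨⟨z, y, by simp⟩, by grind⟩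
    · exact ⟨⟨z, x, by simp⟩, by grind⟩
    · exact ⟨⟨x, z, by simp⟩, by grind⟩

lemma dstar_neg (I : Finset (ZMod L)) (x : ZMod L) (hx : x ∈ dstar I) : -x ∈ dstar I := by
  simp only [dstar, dset, Finset.mem_sdiff, Finset.mem_image, Finset.mem_product,
    Finset.mem_singleton, Prod.exists] at hx ⊢
  obtain ⟨⟨p, q, ⟨hp, hq⟩, rfl⟩, h0⟩ := hx
  exact ⟨⟨q, p, ⟨hq, hp⟩, by ring⟩, by simpa [sub_eq_zero, eq_comm] using h0⟩

open Classical in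
noncomputable def ind (p : Prop) : ℕ := if p then 1 else 0

lemma ind_pos {p : Prop} (h : p) : ind p = 1 := if_pos h

open Classical in
lemma filter_le (C : Finset (Finset (ZMod L))) (hC : IsSCAC L 3 C) (Q : ZMod L → Prop)
    (D : Prop) (hD : ∀ x, Q x → D) (hQ : ∀ x y, Q x → Q y → y = x ∨ y = -x) :
    ∑ I ∈ C, (ind (∃ x ∈ dstar I, Q x)) ≤ ind D := by
  have e : ∑ I ∈ C, ind (∃ x ∈ dstar I, Q x) = (C.filter fun I => ∃ x ∈ dstar I, Q x).card := by
    rw [Finset.card_filter]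
    apply Finset.sum_congr rfl
    intro I _
    unfold ind
    congr
  rw [e]
  unfold ind
  by_cases h : D
  · rw [if_pos h, Finset.card_le_one]
    intro I hI J hJ
    rw [Finset.mem_filter] at hI hJ
    obtain ⟨hI, x, hx, qx⟩ := hI
    obtain ⟨hJ, y, hy, qy⟩ := hJ
    by_contra hne
    have hd := hC.2.2 I hI J hJ hne
    rw [Finset.disjoint_left] at hd
    have hyx : y ∈ dstar I := by
      rcases hQ x y qx qy with rfl | rfl
      · exact hx
      · exact dstar_neg I x hx
    exact hd (Finset.mem_union_left _ hyx) (Finset.mem_union_left _ hy)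
  · rw [if_neg h, Nat.le_zero, Finset.card_eq_zero, Finset.filter_eq_empty_iff]
    rintro I - ⟨x, -, hx⟩
    exact h (hD x hx)

open Classical in
lemma main_bound [NeZero L] (hL : 18 ≤ L) (hE : Even L) (C : Finset (Finset (ZMod L)))
    (hC : IsSCAC L 3 C) :
    8 * C.card + 2 ≤ L + 4 * (ind (3 ∣ L)) + 2 * (ind (4 ∣ L))
      + 2 * (ind (¬ 3 ∣ L)) := by
  have f3 := filter_le C hC (fun x => x ≠ 0 ∧ 3 * x = 0) (3 ∣ L)
    (fun x h => (three_zero x h.1 h.2).1) (fun x y h h' => unique_three x y h.1 h'.1 h.2 h'.2)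
  have f4 := filter_le C hC (fun x => 2 * x ≠ 0 ∧ 4 * x = 0) (4 ∣ L)
    (fun x h => four_dvd hE x h.1 h.2) (fun x y h h' => unique_four x y h.1 h'.1 h.2 h'.2)
  have fu := filter_le C hC (fun x => 3 * x = 1) (¬ 3 ∣ L)
    (fun x h => not_three_dvd x h) (fun x y h h' => by left; linear_combination x * h' - y * h)
  have hone : (1 : ZMod L) ≠ 0 := by
    have : Fact (1 < L) := ⟨by omega⟩
    exact one_ne_zero
  have hb : (C.biUnion dplus).card + 2 ≤ L := by
    have hsub : C.biUnion dplus ⊆ Finset.univ \ {0, 1} := by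
      intro t ht
      rw [Finset.mem_biUnion] at ht
      obtain ⟨I, hI, ht⟩ := ht
      obtain ⟨h1, h1'⟩ := hC.2.1 I hI
      have h0 : (0 : ZMod L) ∉ dstar I := by simp [dstar]
      simp only [dplus, Finset.mem_union, Finset.mem_image] at ht
      simp only [Finset.mem_sdiff, Finset.mem_univ, true_and, Finset.mem_insert,
        Finset.mem_singleton, not_or]
      rcases ht with ht | ⟨y, hy, rfl⟩
      · exact ⟨fun e => h0 (e ▸ ht), fun e => h1 (e ▸ ht)⟩
      · refine ⟨fun e => h1' ?_, fun e => h0 ?_⟩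
        · rwa [← eq_neg_of_add_eq_zero_left e]
        · rwa [add_eq_right.1 e] at hy
    have := Finset.card_le_card hsub
    rw [Finset.card_sdiff_of_subset (Finset.subset_univ _), Finset.card_univ, ZMod.card,
      Finset.card_pair hone.symm] at this
    omega
  rw [Finset.card_biUnion (fun I hI J hJ h => hC.2.2 I hI J hJ h)] at hb
  have hpt : ∑ I ∈ C, 8 ≤ ∑ I ∈ C, ((dplus I).card
      + 4 * (ind (∃ x ∈ dstar I, x ≠ 0 ∧ 3 * x = 0))
      + 2 * (ind (∃ x ∈ dstar I, 2 * x ≠ 0 ∧ 4 * x = 0))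
      + 2 * (ind (∃ x ∈ dstar I, 3 * x = 1))) := by
    apply Finset.sum_le_sum
    intro I hI
    obtain ⟨h1, h1'⟩ := hC.2.1 I hI
    rcases good_code hE I (hC.1 I hI) h1 h1' with h | ⟨h, h' | h'⟩ | ⟨h, h'⟩ <;>
      change _ ≤ (dplus I).card at h
    · omega
    · unfold P4 at h'
      rw [ind_pos h']; omega
    · unfold Pu at h'
      rw [ind_pos h']; omega
    · unfold P3 at h'
      rw [ind_pos h']; omega
  rw [Finset.sum_const, smul_eq_mul] at hpt
  simp only [Finset.sum_add_distrib, ← Finset.mul_sum] at hpt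
  omega

end aux

theorem MS_upper_mod12 (L : ℕ) (hL : 18 ≤ L) (hE : Even L) :
    (L % 12 = 0 → MS L 3 ≤ (L + 4) / 8) ∧
    (L % 12 = 4 ∨ L % 12 = 6 ∨ L % 12 = 8 → MS L 3 ≤ (L + 2) / 8) ∧
    (L % 12 = 2 ∨ L % 12 = 10 → MS L 3 ≤ L / 8) := by
  have : NeZero L := ⟨by omega⟩
  have key : ∀ B : ℕ, (∀ C : Finset (Finset (ZMod L)), IsSCAC L 3 C → C.card ≤ B) →
      MS L 3 ≤ B := by
    intro B hB
    apply csSup_le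
    · exact ⟨0, ∅, ⟨by simp, by simp, by simp⟩, by simp⟩
    · rintro n ⟨C, hC, rfl⟩
      exact hB C hC
  refine ⟨fun h => key _ fun C hC => ?_, fun h => key _ fun C hC => ?_,
    fun h => key _ fun C hC => ?_⟩ <;>
  · have := main_bound hL hE C hC
    unfold ind at this
    split_ifs at this <;> omega
end

section
/- For every even integer L ≥ 18: M_S(L,3) ≤ L/8 if L ≡ 0 (mod 8); M_S(L,3) ≤ (L−4)/8 if L ≡ 4 (mod 8); M_S(L,3) ≤ (L+2)/8 if L ≡ 6 (mod 24); M_S(L,3) ≤ (L−2)/8 if L ≡ 2, 10, or 18 (mod 24); and M_S(L,3) ≤ (L−6)/8 if L ≡ 14 or 22 (mod 24). -/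
open Finset

theorem listCard {R : Type*} [DecidableEq R] (P : Finset R) (l : List R) (h : l.Nodup)
    (hs : ∀ a ∈ l, a ∈ P) : l.length ≤ P.card := by
  rw [← List.toFinset_card_of_nodup h]
  exact Finset.card_le_card (fun a ha => hs a (by simpa using ha))

theorem nodupAux (l : List ℕ) (h : l.Pairwise (· ≠ ·)) : l.Nodup := h

/-- The numbers of the form difference, or difference plus one, for `X + Y + Z = L`. -/
def Cov (P : Finset ℕ) (L X : ℕ) : Prop := X ∈ P ∧ X + 1 ∈ P ∧ L - X ∈ P ∧ L - X + 1 ∈ P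

theorem natCore (P : Finset ℕ) (L X Y Z : ℕ) (hL : L % 2 = 0) (hs : X + Y + Z = L)
    (h2 : 2 ≤ X) (hXY : X ≤ Y) (hYZ : Y ≤ Z)
    (hx : Cov P L X) (hy : Cov P L Y) (hz : Cov P L Z) :
    8 ≤ P.card ∨ (3 * X = L ∧ 4 ≤ P.card) ∨ (4 * X = L ∧ 6 ≤ P.card) ∨
      ((3 * Y = L + 1 ∨ 3 * Y + 1 = L) ∧ 6 ≤ P.card) := by
  obtain ⟨x1, x2, x3, x4⟩ := hx
  obtain ⟨y1, y2, y3, y4⟩ := hy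
  obtain ⟨z1, z2, z3, z4⟩ := hz
  have key := listCard P
  rcases Nat.eq_or_lt_of_le hXY with e | e <;> rcases Nat.eq_or_lt_of_le hYZ with f | f
  · right; left
    refine ⟨by omega, ?_⟩
    apply key [X, X + 1, L - X, L - X + 1]
    · simp; omega
    · simp [*]
  · by_cases c1 : 4 * X = L
    · right; right; left
      refine ⟨c1, ?_⟩
      apply key [X, X + 1, Z, Z + 1, L - X, L - X + 1]
      · simp; omega
      · simp [*]
    by_cases c2 : Z = X + 1
    · right; right; right
      refine ⟨by omega, ?_⟩
      apply key [X, X + 1, Z + 1, L - Z, L - X, L - X + 1]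
      · simp; omega
      · simp only [List.forall_mem_cons]
        exact ⟨x1, x2, z2, z3, x3, x4, by simp⟩
    left
    apply key [X, X + 1, Z, Z + 1, L - X, L - X + 1, L - Z, L - Z + 1]
    · simp; omega
    · simp [*]
  · by_cases c2 : Y = X + 1
    · right; right; right
      refine ⟨by omega, ?_⟩
      apply key [X, Y, Y + 1, L - Y, L - X, L - X + 1]
      · simp; omega
      · simp [*]
    left
    apply key [X, X + 1, Y, Y + 1, L - X, L - X + 1, L - Y, L - Y + 1]
    · simp; omega
    · simp only [List.forall_mem_cons]
      exact ⟨x1, x2, y1, y2, x3, x4, y3, y4, by simp⟩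
  · left
    by_cases c : 2 * Z = L
    · apply key [X, Y, Y + 1, Z, Z + 1, L - Y, L - X, L - X + 1]
      · simp; omega
      · simp [*]
    · apply key [X, Y, Z, Z + 1, L - X, L - Y, L - Z, L - X + 1]
      · simp; omega
      · simp [*]

theorem natAdj (P : Finset ℕ) (L X Y Z d : ℕ) (hL : L % 12 = 0) (hs : X + Y + Z = L)
    (h2 : 2 ≤ X) (hXY : X ≤ Y) (hYZ : Y ≤ Z)
    (hx : Cov P L X) (hy : Cov P L Y) (hz : Cov P L Z)
    (hd : d = X ∨ d = Y ∨ d = Z ∨ d = L - X ∨ d = L - Y ∨ d = L - Z)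
    (hd' : d + 1 = X ∨ d + 1 = Y ∨ d + 1 = Z ∨ d + 1 = L - X ∨ d + 1 = L - Y ∨ d + 1 = L - Z) :
    9 ≤ P.card ∨ 3 * Y = L := by
  obtain ⟨x1, x2, x3, x4⟩ := hx
  obtain ⟨y1, y2, y3, y4⟩ := hy
  obtain ⟨z1, z2, z3, z4⟩ := hz
  by_cases c : 3 * Y = L
  · exact Or.inr c
  left
  have key := listCard P
  have : Y = X + 1 ∨ Z = Y + 1 := by omega
  rcases this with e | e
  · apply key [X, Y, Y + 1, L - Y, L - X, L - X + 1, Z, Z + 1, L - Z]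
    · simp; omega
    · simp only [List.forall_mem_cons]
      exact ⟨x1, y1, y2, y3, x3, x4, z1, z2, z3, by simp⟩
  · apply key [Y, Z, Z + 1, L - Z, L - Y, L - Y + 1, X, X + 1, L - X]
    · simp; omega
    · simp only [List.forall_mem_cons]
      exact ⟨y1, z1, z2, z3, y3, y4, x1, x2, x3, by simp⟩

def DRep {L : ℕ} (D : Finset (ZMod L)) (X Y Z : ℕ) : Prop :=
  ∀ n : ℕ, n < L → ((n : ZMod L) ∈ D ↔
    (n = X ∨ n = Y ∨ n = Z ∨ n = L - X ∨ n = L - Y ∨ n = L - Z))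

theorem DRep.p1 {L : ℕ} {D : Finset (ZMod L)} {X Y Z : ℕ} (h : DRep D X Y Z) : DRep D Y X Z := by
  intro n hn; rw [h n hn]; tauto

theorem DRep.p2 {L : ℕ} {D : Finset (ZMod L)} {X Y Z : ℕ} (h : DRep D X Y Z) : DRep D X Z Y := by
  intro n hn; rw [h n hn]; tauto

theorem natCast_eq_iff {L : ℕ} [NeZero L] (n : ℕ) (hn : n < L) (x : ZMod L) :
    (n : ZMod L) = x ↔ n = x.val := by
  constructor
  · rintro rfl
    rw [ZMod.val_natCast_of_lt hn]
  · rintro rfl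
    simp

theorem natCast_eq_neg_iff {L : ℕ} [NeZero L] (n : ℕ) (hn : n < L) (x : ZMod L) (hx : x ≠ 0) :
    (n : ZMod L) = -x ↔ n = L - x.val := by
  rw [natCast_eq_iff n hn]
  haveI : NeZero x := ⟨hx⟩
  rw [ZMod.val_neg_of_ne_zero]

theorem exRep1 {L : ℕ} (hL : 18 ≤ L) (I : Finset (ZMod L)) (hI : I.card = 3)
    (h1 : (1 : ZMod L) ∉ dstar I) :
    ∃ X Y Z, X + Y + Z = L ∧ 2 ≤ X ∧ 2 ≤ Y ∧ 2 ≤ Z ∧ DRep (dstar I) X Y Z := by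
  haveI : NeZero L := ⟨by omega⟩
  obtain ⟨p, q, r, hpq, hpr, hqr, rfl⟩ := Finset.card_eq_three.mp hI
  have mem : ∀ v, v ∈ dstar ({p, q, r} : Finset (ZMod L)) ↔
      (v = p - q ∨ v = q - r ∨ v = r - p ∨ v = -(p - q) ∨ v = -(q - r) ∨ v = -(r - p)) := by
    intro v
    have a1 := sub_ne_zero.mpr hpq
    have a2 := sub_ne_zero.mpr hpr
    have a3 := sub_ne_zero.mpr hqr
    have a4 := sub_ne_zero.mpr hpq.symm
    have a5 := sub_ne_zero.mpr hpr.symm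
    have a6 := sub_ne_zero.mpr hqr.symm
    simp only [dstar, dset, Finset.mem_sdiff, Finset.mem_image, Finset.mem_product,
      Finset.mem_insert, Finset.mem_singleton, Prod.exists, neg_sub]
    constructor
    · rintro ⟨⟨a, b, ⟨rfl | rfl | rfl, rfl | rfl | rfl⟩, rfl⟩, h⟩ <;> simp_all
    · rintro (rfl | rfl | rfl | rfl | rfl | rfl)
      · exact ⟨⟨p, q, by simp⟩, a1⟩
      · exact ⟨⟨q, r, by simp⟩, a3⟩
      · exact ⟨⟨r, p, by simp⟩, a5⟩
      · exact ⟨⟨q, p, by simp⟩, a4⟩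
      · exact ⟨⟨r, q, by simp⟩, a6⟩
      · exact ⟨⟨p, r, by simp⟩, a2⟩
  have hx : p - q ≠ 0 := sub_ne_zero.mpr hpq
  have hy : q - r ≠ 0 := sub_ne_zero.mpr hqr
  have hz : r - p ≠ 0 := sub_ne_zero.mpr hpr.symm
  have hsum : (p - q) + (q - r) + (r - p) = 0 := by ring
  generalize p - q = x at *
  generalize q - r = y at *
  generalize r - p = z at *
  have rep : DRep (dstar ({p, q, r} : Finset (ZMod L))) x.val y.val z.val := by
    intro n hn
    rw [mem, natCast_eq_iff n hn, natCast_eq_iff n hn, natCast_eq_iff n hn,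
      natCast_eq_neg_iff n hn _ hx, natCast_eq_neg_iff n hn _ hy, natCast_eq_neg_iff n hn _ hz]
  have hx' := ZMod.val_lt x
  have hy' := ZMod.val_lt y
  have hz' := ZMod.val_lt z
  have hx0 : x.val ≠ 0 := by rwa [Ne, ZMod.val_eq_zero]
  have hy0 : y.val ≠ 0 := by rwa [Ne, ZMod.val_eq_zero]
  have hz0 : z.val ≠ 0 := by rwa [Ne, ZMod.val_eq_zero]
  have h1' := rep 1 (by omega)
  rw [Nat.cast_one] at h1'
  have h1'' := mt h1'.mpr h1
  have hd : L ∣ x.val + y.val + z.val := by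
    rw [← ZMod.natCast_eq_zero_iff]
    push_cast
    simpa using hsum
  obtain ⟨k, hk⟩ := hd
  have hk3 : k < 3 := by
    by_contra hc
    have : L * 3 ≤ L * k := Nat.mul_le_mul_left _ (by omega)
    omega
  interval_cases k
  · omega
  · exact ⟨x.val, y.val, z.val, by omega, by omega, by omega, by omega, rep⟩
  · refine ⟨L - x.val, L - y.val, L - z.val, by omega, by omega, by omega, by omega, ?_⟩
    intro n hn
    rw [rep n hn]
    omega

theorem exRep {L : ℕ} (hL : 18 ≤ L) (I : Finset (ZMod L)) (hI : I.card = 3)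
    (h1 : (1 : ZMod L) ∉ dstar I) :
    ∃ X Y Z, X + Y + Z = L ∧ 2 ≤ X ∧ X ≤ Y ∧ Y ≤ Z ∧ DRep (dstar I) X Y Z := by
  obtain ⟨X, Y, Z, hs, hX, hY, hZ, h⟩ := exRep1 hL I hI h1
  rcases le_total X Y with a | a <;> rcases le_total Y Z with b | b <;>
    rcases le_total X Z with c | c
  · exact ⟨X, Y, Z, by omega, by omega, by omega, by omega, h⟩
  · exact ⟨X, Y, Z, by omega, by omega, by omega, by omega, h⟩
  · exact ⟨X, Z, Y, by omega, by omega, by omega, by omega, h.p2⟩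
  · exact ⟨Z, X, Y, by omega, by omega, by omega, by omega, h.p2.p1⟩
  · exact ⟨Y, X, Z, by omega, by omega, by omega, by omega, h.p1⟩
  · exact ⟨Y, Z, X, by omega, by omega, by omega, by omega, h.p1.p2⟩
  · exact ⟨Z, Y, X, by omega, by omega, by omega, by omega, h.p1.p2.p1⟩
  · exact ⟨Z, Y, X, by omega, by omega, by omega, by omega, h.p1.p2.p1⟩

theorem cov {L : ℕ} (hL : 18 ≤ L) (I : Finset (ZMod L)) (X : ℕ) (h2 : 2 ≤ X) (hX : X + 2 ≤ L)
    (m1 : (X : ZMod L) ∈ dstar I) (m2 : ((L - X : ℕ) : ZMod L) ∈ dstar I) :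
    Cov ((dplus I).image ZMod.val) L X := by
  have key : ∀ n : ℕ, n + 1 < L → (n : ZMod L) ∈ dstar I →
      n ∈ (dplus I).image ZMod.val ∧ n + 1 ∈ (dplus I).image ZMod.val := by
    intro n hn hm
    constructor
    · rw [Finset.mem_image]
      exact ⟨n, Finset.mem_union_left _ hm, ZMod.val_natCast_of_lt (by omega)⟩
    · rw [Finset.mem_image]
      refine ⟨((n + 1 : ℕ) : ZMod L), Finset.mem_union_right _ ?_, ZMod.val_natCast_of_lt (by omega)⟩
      rw [Finset.mem_image]
      exact ⟨n, hm, by push_cast; rfl⟩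
  have a := key X (by omega) m1
  have b := key (L - X) (by omega) m2
  exact ⟨a.1, a.2, b.1, b.2⟩

theorem repCov {L : ℕ} (hL : 18 ≤ L) (I : Finset (ZMod L)) (X Y Z : ℕ) (hs : X + Y + Z = L)
    (h2 : 2 ≤ X) (hXY : X ≤ Y) (hYZ : Y ≤ Z) (h : DRep (dstar I) X Y Z) :
    Cov ((dplus I).image ZMod.val) L X ∧ Cov ((dplus I).image ZMod.val) L Y ∧
    Cov ((dplus I).image ZMod.val) L Z := by
  refine ⟨cov hL I X ?_ ?_ ?_ ?_, cov hL I Y ?_ ?_ ?_ ?_, cov hL I Z ?_ ?_ ?_ ?_⟩ <;>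
    first
    | omega
    | (rw [h _ (by omega)]; simp)

open Classical in
noncomputable def wt (L : ℕ) (p : Prop) (m c : ℕ) (I : Finset (ZMod L)) : ℕ :=
  if p ∧ (m : ZMod L) ∈ dstar I then c else 0

noncomputable def m1 (L : ℕ) : ℕ := if L % 3 = 2 then (L + 1) / 3 else (L - 1) / 3

noncomputable def tot (L : ℕ) (I : Finset (ZMod L)) : ℕ :=
  (dplus I).card + wt L (L % 3 = 0) (L / 3) 4 I + wt L (L % 4 = 0) (L / 4) 2 I +
    wt L (L % 3 ≠ 0) (m1 L) 2 I

theorem wt_pos {L : ℕ} {p : Prop} {m c : ℕ} {I : Finset (ZMod L)} (hp : p)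
    (hm : (m : ZMod L) ∈ dstar I) : wt L p m c I = c := by
  unfold wt; rw [if_pos ⟨hp, hm⟩]

theorem tot_ge {L : ℕ} (hL : 18 ≤ L) (hE : L % 2 = 0) (I : Finset (ZMod L)) (hI : I.card = 3)
    (h1 : (1 : ZMod L) ∉ dstar I) : 8 ≤ tot L I := by
  obtain ⟨X, Y, Z, hs, h2, hXY, hYZ, h⟩ := exRep hL I hI h1
  obtain ⟨cx, cy, cz⟩ := repCov hL I X Y Z hs h2 hXY hYZ h
  have hc : ((dplus I).image ZMod.val).card ≤ (dplus I).card := Finset.card_image_le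
  unfold tot
  rcases natCore _ L X Y Z hE hs h2 hXY hYZ cx cy cz with a | ⟨a, b⟩ | ⟨a, b⟩ | ⟨a, b⟩
  · omega
  · rw [wt_pos (p := L % 3 = 0) (m := L / 3) (by omega)]
    · omega
    · rw [h _ (by omega)]; omega
  · rw [wt_pos (p := L % 4 = 0) (m := L / 4) (by omega)]
    · omega
    · rw [h _ (by omega)]; omega
  · have e : m1 L = Y := by unfold m1; split_ifs <;> omega
    rw [wt_pos (p := L % 3 ≠ 0) (m := m1 L) (by omega)]
    · omega
    · rw [e, h _ (by omega)]; omega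

theorem tot_adj {L : ℕ} (hL : 18 ≤ L) (hE : L % 12 = 0) (I : Finset (ZMod L)) (hI : I.card = 3)
    (h1 : (1 : ZMod L) ∉ dstar I) (d : ℕ) (hd : d + 1 < L) (m : (d : ZMod L) ∈ dstar I)
    (m' : ((d + 1 : ℕ) : ZMod L) ∈ dstar I) : 9 ≤ tot L I := by
  obtain ⟨X, Y, Z, hs, h2, hXY, hYZ, h⟩ := exRep hL I hI h1
  obtain ⟨cx, cy, cz⟩ := repCov hL I X Y Z hs h2 hXY hYZ h
  have hc : ((dplus I).image ZMod.val).card ≤ (dplus I).card := Finset.card_image_le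
  have hd1 := (h _ (by omega)).mp m
  have hd2 := (h _ (by omega)).mp m'
  rcases natAdj _ L X Y Z d hE hs h2 hXY hYZ cx cy cz hd1 hd2 with a | a
  · unfold tot; omega
  · have hne : X ≠ Y := by omega
    have b : 8 ≤ ((dplus I).image ZMod.val).card := by
      rcases natCore _ L X Y Z (by omega) hs h2 hXY hYZ cx cy cz with a | ⟨a, b⟩ | ⟨a, b⟩ | ⟨a, b⟩ <;>
        omega
    unfold tot
    rw [wt_pos (p := L % 3 = 0) (m := L / 3) (by omega)]
    · omega
    · rw [h _ (by omega)]; omega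

theorem dplus_left {L : ℕ} {I : Finset (ZMod L)} {x : ZMod L} (h : x ∈ dstar I) : x ∈ dplus I :=
  Finset.mem_union_left _ h

theorem dplus_right {L : ℕ} {I : Finset (ZMod L)} {x : ZMod L} (h : x ∈ dstar I) :
    x + 1 ∈ dplus I :=
  Finset.mem_union_right _ (Finset.mem_image_of_mem _ h)

open Classical in
theorem sum_wt {L : ℕ} (C : Finset (Finset (ZMod L))) (hC : IsSCAC L 3 C) (p : Prop) (m c : ℕ) :
    ∑ I ∈ C, wt L p m c I ≤ if p ∧ ∃ I ∈ C, (m : ZMod L) ∈ dstar I then c else 0 := by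
  split_ifs with h
  · obtain ⟨hp, I, hI, hm⟩ := h
    rw [Finset.sum_eq_single I]
    · unfold wt; split_ifs <;> omega
    · intro J hJ hne
      unfold wt
      rw [if_neg]
      rintro ⟨-, hm'⟩
      exact Finset.disjoint_left.mp (hC.2.2 J hJ I hI hne) (dplus_left hm') (dplus_left hm)
    · intro h; exact absurd hI h
  · apply le_of_eq
    apply Finset.sum_eq_zero
    intro I hI
    unfold wt
    rw [if_neg]
    rintro ⟨hp, hm⟩
    exact h ⟨hp, I, hI, hm⟩

theorem biU_card {L : ℕ} (C : Finset (Finset (ZMod L))) (hC : IsSCAC L 3 C) :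
    (C.biUnion dplus).card = ∑ I ∈ C, (dplus I).card :=
  Finset.card_biUnion (fun I hI J hJ hne => hC.2.2 I hI J hJ hne)

theorem biU_sub {L : ℕ} [NeZero L] (C : Finset (Finset (ZMod L))) (hC : IsSCAC L 3 C) :
    C.biUnion dplus ⊆ Finset.univ \ {0, 1} := by
  intro x hx
  obtain ⟨I, hI, hx⟩ := Finset.mem_biUnion.mp hx
  have h0 : (0 : ZMod L) ∉ dstar I := by simp [dstar]
  obtain ⟨ha, hb⟩ := hC.2.1 I hI
  simp only [Finset.mem_sdiff, Finset.mem_univ, true_and, Finset.mem_insert, Finset.mem_singleton]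
  rcases Finset.mem_union.mp hx with h | h
  · rintro (rfl | rfl)
    · exact h0 h
    · exact ha h
  · obtain ⟨y, hy, rfl⟩ := Finset.mem_image.mp h
    rintro (e | e)
    · exact hb (by rwa [← eq_neg_of_add_eq_zero_left e])
    · exact h0 (by rwa [← show y = 0 by simpa using e])

theorem card_compl {L : ℕ} [NeZero L] (hL : 18 ≤ L) :
    (Finset.univ \ {0, 1} : Finset (ZMod L)).card = L - 2 := by
  haveI : Fact (1 < L) := ⟨by omega⟩
  rw [Finset.card_sdiff_of_subset (Finset.subset_univ _), Finset.card_univ, ZMod.card,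
    Finset.card_pair (zero_ne_one)]

open Classical in
theorem bound1 {L : ℕ} (hL : 18 ≤ L) (hE : L % 2 = 0) (C : Finset (Finset (ZMod L)))
    (hC : IsSCAC L 3 C) :
    8 * C.card ≤ ∑ I ∈ C, tot L I ∧
    ∑ I ∈ C, tot L I ≤ (C.biUnion dplus).card + (if L % 3 = 0 then 4 else 2) +
      (if L % 4 = 0 ∧ ∃ I ∈ C, ((L / 4 : ℕ) : ZMod L) ∈ dstar I then 2 else 0) ∧
    (C.biUnion dplus).card ≤ L - 2 := by
  haveI : NeZero L := ⟨by omega⟩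
  refine ⟨?_, ?_, ?_⟩
  · have := Finset.card_nsmul_le_sum C (tot L) 8
      (fun I hI => tot_ge hL hE I (hC.1 I hI) (hC.2.1 I hI).1)
    rw [smul_eq_mul, mul_comm] at this
    exact this
  · rw [biU_card C hC]
    unfold tot
    rw [Finset.sum_add_distrib, Finset.sum_add_distrib, Finset.sum_add_distrib]
    have h1 := sum_wt C hC (L % 3 = 0) (L / 3) 4
    have h2 := sum_wt C hC (L % 4 = 0) (L / 4) 2
    have h3 := sum_wt C hC (L % 3 ≠ 0) (m1 L) 2
    have h1' : ∑ I ∈ C, wt L (L % 3 = 0) (L / 3) 4 I + ∑ I ∈ C, wt L (L % 3 ≠ 0) (m1 L) 2 I ≤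
        if L % 3 = 0 then 4 else 2 := by
      by_cases c : L % 3 = 0
      · rw [if_pos c]
        rw [if_neg (by tauto)] at h3
        split_ifs at h1 <;> omega
      · rw [if_neg c]
        rw [if_neg (by tauto)] at h1
        split_ifs at h3 <;> omega
    refine le_trans ?_ (Nat.add_le_add (Nat.add_le_add_left h1' _)
      (h2.trans (le_of_eq (by congr))))
    omega
  · rw [← card_compl hL]
    exact Finset.card_le_card (biU_sub C hC)

theorem bound12 {L : ℕ} (hL : 18 ≤ L) (hE : L % 24 = 12) (C : Finset (Finset (ZMod L)))
    (hC : IsSCAC L 3 C) : 8 * C.card < L + 4 := by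
  classical
  haveI : NeZero L := ⟨by omega⟩
  by_contra hlt
  obtain ⟨b1, b2, b3⟩ := bound1 hL (by omega) C hC
  rw [if_pos (by omega : L % 3 = 0)] at b2
  by_cases hex : L % 4 = 0 ∧ ∃ I ∈ C, ((L / 4 : ℕ) : ZMod L) ∈ dstar I
  swap
  · rw [if_neg hex] at b2; omega
  rw [if_pos hex] at b2
  obtain ⟨-, I0, hI0, hm0⟩ := hex
  have hU : C.biUnion dplus = Finset.univ \ {0, 1} := by
    apply Finset.eq_of_subset_of_card_le (biU_sub C hC)
    rw [card_compl hL]; omega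
  have noadj : ∀ I ∈ C, ∀ d : ℕ, d + 1 < L → (d : ZMod L) ∈ dstar I →
      ((d + 1 : ℕ) : ZMod L) ∉ dstar I := by
    intro I hI d hd m m'
    have h9 := tot_adj hL (by omega) I (hC.1 I hI) (hC.2.1 I hI).1 d hd m m'
    have : ∑ J ∈ C, 8 < ∑ J ∈ C, tot L J := Finset.sum_lt_sum
      (fun J hJ => tot_ge hL (by omega) J (hC.1 J hJ) (hC.2.1 J hJ).1) ⟨I, hI, by omega⟩
    rw [Finset.sum_const, smul_eq_mul] at this
    omega
  have noadj2 : ∀ d : ℕ, d + 1 < L → (d : ZMod L) ∈ C.biUnion dstar →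
      ((d + 1 : ℕ) : ZMod L) ∉ C.biUnion dstar := by
    intro d hd m m'
    obtain ⟨I, hI, m⟩ := Finset.mem_biUnion.mp m
    obtain ⟨J, hJ, m'⟩ := Finset.mem_biUnion.mp m'
    by_cases e : I = J
    · subst e; exact noadj I hI d hd m m'
    · refine Finset.disjoint_left.mp (hC.2.2 I hI J hJ e) (dplus_right m) ?_
      have := dplus_left m'
      push_cast at this
      exact this
  have step : ∀ d : ℕ, 1 ≤ d → d + 1 < L → (d : ZMod L) ∉ C.biUnion dstar →
      ((d + 1 : ℕ) : ZMod L) ∈ C.biUnion dstar := by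
    intro d hd1 hd m
    have hin : ((d + 1 : ℕ) : ZMod L) ∈ C.biUnion dplus := by
      rw [hU]
      simp only [Finset.mem_sdiff, Finset.mem_univ, true_and, Finset.mem_insert,
        Finset.mem_singleton]
      rintro (e | e)
      · rw [ZMod.natCast_eq_zero_iff] at e
        exact absurd (Nat.le_of_dvd (by omega) e) (by omega)
      · have e' : (d : ZMod L) = 0 := by push_cast at e; simpa using e
        rw [ZMod.natCast_eq_zero_iff] at e'
        exact absurd (Nat.le_of_dvd (by omega) e') (by omega)
    obtain ⟨I, hI, h⟩ := Finset.mem_biUnion.mp hin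
    rcases Finset.mem_union.mp h with h | h
    · exact Finset.mem_biUnion.mpr ⟨I, hI, h⟩
    · obtain ⟨y, hy, e⟩ := Finset.mem_image.mp h
      exfalso
      apply m
      have : y = d := by push_cast at e; simpa using e
      subst this
      exact Finset.mem_biUnion.mpr ⟨I, hI, hy⟩
  have odd : ∀ k : ℕ, 2 * k + 1 < L → ((2 * k + 1 : ℕ) : ZMod L) ∉ C.biUnion dstar := by
    intro k
    induction k with
    | zero =>
      intro _ h
      obtain ⟨I, hI, h⟩ := Finset.mem_biUnion.mp h
      exact (hC.2.1 I hI).1 (by simpa using h)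
    | succ k ih =>
      intro hk
      exact noadj2 (2 * k + 2) (by omega) (step (2 * k + 1) (by omega) (by omega) (ih (by omega)))
  have := odd (L / 8) (by omega)
  rw [show 2 * (L / 8) + 1 = L / 4 by omega] at this
  exact this (Finset.mem_biUnion.mpr ⟨I0, hI0, hm0⟩)

theorem MS_le {L B : ℕ} (h : ∀ C : Finset (Finset (ZMod L)), IsSCAC L 3 C → C.card ≤ B) :
    MS L 3 ≤ B := by
  unfold MS
  apply csSup_le
  · exact ⟨0, ∅, by simp [IsSCAC], rfl⟩
  · rintro n ⟨C, hC, rfl⟩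
    exact h C hC

theorem MS_upper_even (L : ℕ) (hL : 18 ≤ L) (hE : Even L) :
    (L % 8 = 0 → MS L 3 ≤ L / 8) ∧
    (L % 8 = 4 → MS L 3 ≤ (L - 4) / 8) ∧
    (L % 24 = 6 → MS L 3 ≤ (L + 2) / 8) ∧
    (L % 24 = 2 ∨ L % 24 = 10 ∨ L % 24 = 18 → MS L 3 ≤ (L - 2) / 8) ∧
    (L % 24 = 14 ∨ L % 24 = 22 → MS L 3 ≤ (L - 6) / 8) := by
  have hE2 : L % 2 = 0 := Nat.even_iff.mp hE
  refine ⟨fun h => MS_le fun C hC => ?_, fun h => MS_le fun C hC => ?_,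
    fun h => MS_le fun C hC => ?_, fun h => MS_le fun C hC => ?_, fun h => MS_le fun C hC => ?_⟩ <;>
  · obtain ⟨b1, b2, b3⟩ := bound1 hL hE2 C hC
    have b4 := fun hh => bound12 hL hh C hC
    split_ifs at b2 <;> omega
end

section
/- Let L ≥ 2 and ω ≥ 1 be integers and let C be a CAC of length L and weight ω with |C| = M. For each I ∈ C, let 2I = {2t mod 2L : t ∈ I} ⊆ Z_{2L} (this is well defined, taking any integer representative t of each element of Z_L). Then {2I : I ∈ C} is an SCAC of length 2L and weight ω consisting of M codewords; in particular, M_S(2L, ω) ≥ M(L, ω). -/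
open Finset

/-- A conflict-avoiding code of length `L` and weight `ω`. -/
def IsCAC (L ω : ℕ) (C : Finset (Finset (ZMod L))) : Prop :=
  (∀ I ∈ C, I.card = ω) ∧
  ∀ I ∈ C, ∀ J ∈ C, I ≠ J → Disjoint (dstar I) (dstar J)

/-- `M(L,ω)`: the maximum size of a CAC of length `L` and weight `ω`. -/
noncomputable def MCAC (L ω : ℕ) : ℕ :=
  sSup {n | ∃ C : Finset (Finset (ZMod L)), IsCAC L ω C ∧ C.card = n}

/-- Doubling a codeword: `2I = {2t mod 2L : t ∈ I} ⊆ ℤ_{2L}`. -/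
def double {L : ℕ} (I : Finset (ZMod L)) : Finset (ZMod (2 * L)) :=
  I.image fun t => ((2 * t.val : ℕ) : ZMod (2 * L))

def dbl {L : ℕ} (t : ZMod L) : ZMod (2 * L) := ((2 * t.val : ℕ) : ZMod (2 * L))

lemma dbl_int {L : ℕ} (hL : 2 ≤ L) (n : ℤ) : dbl (n : ZMod L) = ((2 * n : ℤ) : ZMod (2 * L)) := by
  haveI : NeZero L := ⟨by omega⟩
  have h : dbl (n : ZMod L) = ((2 * ((n : ZMod L).val : ℤ) : ℤ) : ZMod (2 * L)) := by
    simp [dbl]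
  rw [h, ZMod.intCast_eq_intCast_iff_dvd_sub, ZMod.val_intCast]
  have h2 := Int.emod_add_mul_ediv n L
  refine ⟨n / L, ?_⟩
  push_cast
  linarith

lemma dbl_sub {L : ℕ} (hL : 2 ≤ L) (a b : ZMod L) : dbl a - dbl b = dbl (a - b) := by
  obtain ⟨m, rfl⟩ := ZMod.intCast_surjective a
  obtain ⟨n, rfl⟩ := ZMod.intCast_surjective b
  rw [← Int.cast_sub, dbl_int hL, dbl_int hL, dbl_int hL]
  push_cast
  ring

lemma dbl_inj {L : ℕ} (hL : 2 ≤ L) : Function.Injective (dbl : ZMod L → ZMod (2 * L)) := by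
  intro a b h
  obtain ⟨m, rfl⟩ := ZMod.intCast_surjective a
  obtain ⟨n, rfl⟩ := ZMod.intCast_surjective b
  rw [dbl_int hL, dbl_int hL, ZMod.intCast_eq_intCast_iff_dvd_sub] at h
  rw [ZMod.intCast_eq_intCast_iff_dvd_sub]
  obtain ⟨k, hk⟩ := h
  refine ⟨k, ?_⟩
  push_cast at hk
  linarith

lemma dbl_zero {L : ℕ} : dbl (0 : ZMod L) = 0 := by simp [dbl]

lemma dbl_parity {L : ℕ} (hL : 2 ≤ L) (a b : ZMod L) : dbl a ≠ dbl b + 1 := by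
  intro h
  obtain ⟨m, rfl⟩ := ZMod.intCast_surjective a
  obtain ⟨n, rfl⟩ := ZMod.intCast_surjective b
  rw [dbl_int hL, dbl_int hL] at h
  have h' : ((2 * m : ℤ) : ZMod (2 * L)) = ((2 * n + 1 : ℤ) : ZMod (2 * L)) := by
    rw [h]; push_cast; ring
  rw [ZMod.intCast_eq_intCast_iff_dvd_sub] at h'
  obtain ⟨k, hk⟩ := h'
  push_cast at hk
  rw [mul_assoc] at hk
  omega

lemma double_eq {L : ℕ} (I : Finset (ZMod L)) : double I = I.image dbl := rfl

lemma mem_dstar_double {L : ℕ} (hL : 2 ≤ L) (I : Finset (ZMod L)) (x : ZMod (2 * L))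
    (hx : x ∈ dstar (double I)) : ∃ y ∈ dstar I, dbl y = x := by
  simp only [dstar, dset, double_eq, mem_sdiff, mem_image, mem_product, mem_singleton,
    Prod.exists] at hx ⊢
  obtain ⟨⟨_, _, ⟨⟨a, ha, rfl⟩, ⟨b, hb, rfl⟩⟩, rfl⟩, h0⟩ := hx
  rw [dbl_sub hL] at h0 ⊢
  refine ⟨a - b, ⟨⟨a, b, ⟨ha, hb⟩, rfl⟩, ?_⟩, rfl⟩
  intro h
  exact h0 (by rw [h, dbl_zero])

lemma double_inj {L : ℕ} (hL : 2 ≤ L) :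
    Function.Injective (double : Finset (ZMod L) → Finset (ZMod (2 * L))) :=
  Finset.image_injective (dbl_inj hL)

lemma isSCAC_double {L ω : ℕ} (hL : 2 ≤ L) (C : Finset (Finset (ZMod L))) (hC : IsCAC L ω C) :
    IsSCAC (2 * L) ω (C.image double) := by
  refine ⟨?_, ?_, ?_⟩
  · intro I hI
    obtain ⟨I, hI2, rfl⟩ := mem_image.1 hI
    rw [double_eq, card_image_of_injective _ (dbl_inj hL)]
    exact hC.1 I hI2
  · intro I hI
    obtain ⟨I, hI2, rfl⟩ := mem_image.1 hI
    constructor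
    · intro h
      obtain ⟨y, -, hy⟩ := mem_dstar_double hL I _ h
      exact dbl_parity hL y 0 (by rw [hy, dbl_zero, zero_add])
    · intro h
      obtain ⟨y, -, hy⟩ := mem_dstar_double hL I _ h
      exact dbl_parity hL 0 y (by rw [hy, dbl_zero]; ring)
  · intro I hI J hJ hIJ
    obtain ⟨I, hI2, rfl⟩ := mem_image.1 hI
    obtain ⟨J, hJ2, rfl⟩ := mem_image.1 hJ
    have hne : I ≠ J := fun h => hIJ (by rw [h])
    have hd := Finset.disjoint_left.1 (hC.2 I hI2 J hJ2 hne)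
    rw [Finset.disjoint_left]
    intro x hx hy
    simp only [dplus, mem_union, mem_image] at hx hy
    rcases hx with hx | ⟨x', hx, rfl⟩ <;> rcases hy with hy | ⟨y', hy, hxy⟩
    · obtain ⟨u, hu, hux⟩ := mem_dstar_double hL I _ hx
      obtain ⟨v, hv, hvx⟩ := mem_dstar_double hL J _ hy
      have : u = v := dbl_inj hL (hux.trans hvx.symm)
      exact hd hu (this ▸ hv)
    · obtain ⟨u, hu, hux⟩ := mem_dstar_double hL I _ hx
      obtain ⟨v, hv, hvx⟩ := mem_dstar_double hL J _ hy
      exact dbl_parity hL u v (by rw [hux, hvx, hxy])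
    · obtain ⟨u, hu, hux⟩ := mem_dstar_double hL I _ hx
      obtain ⟨v, hv, hvx⟩ := mem_dstar_double hL J _ hy
      exact dbl_parity hL v u (by rw [hux, hvx])
    · obtain ⟨u, hu, hux⟩ := mem_dstar_double hL I _ hx
      obtain ⟨v, hv, hvx⟩ := mem_dstar_double hL J _ hy
      have hxy' : y' = x' := add_right_cancel hxy
      have : u = v := dbl_inj hL (by rw [hux, hvx, hxy'])
      exact hd hu (this ▸ hv)

theorem CAC_to_SCAC (L ω M : ℕ) (hL : 2 ≤ L) (hω : 1 ≤ ω)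
    (C : Finset (Finset (ZMod L))) (hC : IsCAC L ω C) (hM : C.card = M) :
    IsSCAC (2 * L) ω (C.image double) ∧ (C.image double).card = M ∧
    MCAC L ω ≤ MS (2 * L) ω := by
  refine ⟨isSCAC_double hL C hC, by rw [card_image_of_injective _ (double_inj hL), hM], ?_⟩
  haveI : NeZero (2 * L) := ⟨by omega⟩
  refine csSup_le ⟨M, C, hC, hM⟩ ?_
  rintro n ⟨D, hD, rfl⟩
  refine le_csSup ⟨Fintype.card (Finset (ZMod (2 * L))), ?_⟩
    ⟨D.image double, isSCAC_double hL D hD, card_image_of_injective _ (double_inj hL)⟩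
  rintro n ⟨E, -, rfl⟩
  exact Finset.card_le_univ E
end

section
/- For every integer L ≥ 18 with L ≡ 4 (mod 8), M_S(L,3) = (L − 4)/8. -/
open Finset

def PP (x y z : ℕ) : Finset ℕ := {x, x+1, y, y+1, z, z+1}

set_option maxHeartbeats 4000000 in
theorem comb {ι : Type*} [DecidableEq ι] (C : Finset ι) (x y z : ι → ℕ) (m : ℕ)
    (h : ∀ i ∈ C, 2 ≤ x i ∧ x i ≤ y i ∧ y i ≤ z i ∧ z i ≤ 4*m+2 ∧
      (x i + y i = z i ∨ x i + y i + z i = 8*m+4))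
    (hd : ∀ i ∈ C, ∀ j ∈ C, i ≠ j → Disjoint (PP (x i) (y i) (z i)) (PP (x j) (y j) (z j))) :
    C.card ≤ m := by
  classical
  by_contra hc
  push Not at hc
  set P : ι → Finset ℕ := fun i => PP (x i) (y i) (z i) with hP
  have memP : ∀ i a, a ∈ P i ↔ (a = x i ∨ a = x i + 1 ∨ a = y i ∨ a = y i + 1 ∨ a = z i ∨ a = z i + 1) := by
    intro i a; simp [hP, PP]
  have hd' : ∀ i ∈ C, ∀ j ∈ C, ∀ a, a ∈ P i → a ∈ P j → i = j := by
    intro i hi j hj a ha hb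
    by_contra hne
    exact Finset.disjoint_left.mp (hd i hi j hj hne) ha hb
  have hsub : C.biUnion P ⊆ Finset.Icc 2 (4*m+3) := by
    intro a ha
    rw [Finset.mem_biUnion] at ha
    obtain ⟨i, hi, ha⟩ := ha
    rw [memP] at ha
    have := h i hi
    rw [Finset.mem_Icc]
    omega
  have hcardU : (C.biUnion P).card = ∑ i ∈ C, (P i).card :=
    Finset.card_biUnion (fun i hi j hj hne => hd i hi j hj hne)
  have hIcc : (Finset.Icc 2 (4*m+3)).card = 4*m+2 := by simp
  have hle : ∑ i ∈ C, (P i).card ≤ 4*m+2 := by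
    rw [← hcardU, ← hIcc]; exact Finset.card_le_card hsub
  have h4 : ∀ i ∈ C, x i + 2 ≤ z i → 4 ≤ (P i).card := by
    intro i hi hz
    have hs : ({x i, x i + 1, z i, z i + 1} : Finset ℕ) ⊆ P i := by
      intro a ha
      simp only [Finset.mem_insert, Finset.mem_singleton] at ha
      rw [memP]; tauto
    refine le_trans (le_of_eq ?_) (Finset.card_le_card hs)
    rw [Finset.card_insert_of_notMem, Finset.card_insert_of_notMem, Finset.card_insert_of_notMem,
      Finset.card_singleton] <;> simp <;> omega
  by_cases hex : ∃ i ∈ C, z i ≤ x i + 1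
  swap
  · push Not at hex
    have : C.card * 4 ≤ ∑ i ∈ C, (P i).card := by
      rw [← smul_eq_mul]
      exact Finset.card_nsmul_le_sum _ _ _ (fun i hi => h4 i hi (hex i hi))
    omega
  obtain ⟨i0, hi0, hz0⟩ := hex
  have h0 := h i0 hi0
  have hoth : ∀ j ∈ C.erase i0, 4 ≤ (P j).card := by
    intro j hj
    rw [Finset.mem_erase] at hj
    apply h4 j hj.2
    by_contra hcon
    apply hj.1
    have hj' := h j hj.2
    apply hd' j hj.2 i0 hi0 (x j) <;> rw [memP] <;> omega
  have hsum := Finset.add_sum_erase C (fun i => (P i).card) hi0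
  have hce := Finset.card_erase_of_mem hi0
  have hlow : (C.erase i0).card * 4 ≤ ∑ i ∈ C.erase i0, (P i).card := by
    rw [← smul_eq_mul]
    exact Finset.card_nsmul_le_sum _ _ _ hoth
  have hP2 : 2 ≤ (P i0).card := by
    have hs : ({x i0, x i0 + 1} : Finset ℕ) ⊆ P i0 := by
      intro a ha
      simp only [Finset.mem_insert, Finset.mem_singleton] at ha
      rw [memP]; tauto
    refine le_trans (le_of_eq ?_) (Finset.card_le_card hs)
    rw [Finset.card_pair]; omega
  have hzx : z i0 = x i0 := by
    by_contra hne
    have hs : ({x i0, x i0 + 1, x i0 + 2} : Finset ℕ) ⊆ P i0 := by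
      intro a ha
      simp only [Finset.mem_insert, Finset.mem_singleton] at ha
      rw [memP]; omega
    have := Finset.card_le_card hs
    rw [Finset.card_insert_of_notMem (by simp), Finset.card_pair (by omega)] at this
    omega
  have hx0 : 3 * x i0 = 8*m+4 := by omega
  have hP4 : ∀ j ∈ C.erase i0, (P j).card ≤ 4 := by
    intro j hj
    have hsum2 := Finset.add_sum_erase (C.erase i0) (fun i => (P i).card) hj
    have hce2 := Finset.card_erase_of_mem hj
    have hlow2 : ((C.erase i0).erase j).card * 4 ≤ ∑ i ∈ (C.erase i0).erase j, (P i).card := by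
      rw [← smul_eq_mul]
      exact Finset.card_nsmul_le_sum _ _ _ (fun i hi => hoth i (Finset.mem_of_mem_erase hi))
    have := Finset.card_pos.mpr ⟨j, hj⟩
    omega
  have hU : C.biUnion P = Finset.Icc 2 (4*m+3) := by
    apply Finset.eq_of_subset_of_card_le hsub
    rw [hcardU, hIcc]; omega
  have no5 : ∀ j ∈ C.erase i0, ∀ a b c d e, a < b → b < c → c < d → d < e → a ∈ P j → b ∈ P j →
      c ∈ P j → d ∈ P j → e ∈ P j → False := by
    intro j hj a b c d e h1 h2 h3 h5 ha hb hc' hd1 he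
    have hs : ({a, b, c, d, e} : Finset ℕ) ⊆ P j := by
      intro t ht
      simp only [Finset.mem_insert, Finset.mem_singleton] at ht
      rcases ht with rfl | rfl | rfl | rfl | rfl <;> assumption
    have h5 : ({a, b, c, d, e} : Finset ℕ).card = 5 := by
      rw [Finset.card_insert_of_notMem, Finset.card_insert_of_notMem, Finset.card_insert_of_notMem,
        Finset.card_insert_of_notMem, Finset.card_singleton] <;> simp <;> omega
    have := Finset.card_le_card hs
    have := hP4 j hj
    omega
  -- within one codeword, no consecutive elements
  have key : ∀ j ∈ C, y j ≠ x j + 1 ∧ z j ≠ y j + 1 ∧ z j ≠ x j + 1 := by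
    intro j hj
    by_cases hji : j = i0
    · subst hji; omega
    have hje : j ∈ C.erase i0 := Finset.mem_erase.mpr ⟨hji, hj⟩
    have hj' := h j hj
    have hx : ¬ (x j + 1 = x i0 ∨ x j = x i0 ∨ y j = x i0 ∨ z j = x i0) := by
      intro hh
      apply hji
      apply hd' j hj i0 hi0 (x i0) <;> rw [memP] <;> omega
    refine ⟨fun hy => ?_, fun hy => ?_, fun hy => ?_⟩
    · by_cases hzz : z j ≤ x j + 2
      · omega
      · apply no5 j hje (x j) (x j + 1) (x j + 2) (z j) (z j + 1) <;> first | omega | (rw [memP]; omega)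
    · by_cases hyy : y j ≤ x j + 1
      · omega
      · apply no5 j hje (x j) (x j + 1) (y j) (y j + 1) (y j + 2) <;> first | omega | (rw [memP]; omega)
    · omega
  have E : ∀ t, t ≤ 2*m → ∃ i ∈ C, (x i = 2*t+2 ∨ y i = 2*t+2 ∨ z i = 2*t+2) := by
    intro t
    induction t with
    | zero =>
      intro _
      have : 2 ∈ C.biUnion P := by rw [hU, Finset.mem_Icc]; omega
      rw [Finset.mem_biUnion] at this
      obtain ⟨i, hi, ha⟩ := this
      rw [memP] at ha
      have := h i hi
      exact ⟨i, hi, by omega⟩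
    | succ t ih =>
      intro ht
      obtain ⟨i, hi, hi'⟩ := ih (by omega)
      have : 2*t+4 ∈ C.biUnion P := by rw [hU, Finset.mem_Icc]; omega
      rw [Finset.mem_biUnion] at this
      obtain ⟨j, hj, ha⟩ := this
      refine ⟨j, hj, ?_⟩
      rw [memP] at ha
      by_contra hcon
      have hij : i = j := by
        apply hd' i hi j hj (2*t+3) <;> rw [memP] <;> omega
      subst hij
      have := key i hi
      have := h i hi
      omega
  have Odd' : ∀ j ∈ C, ∀ a, (a = x j ∨ a = y j ∨ a = z j) → a % 2 = 0 := by
    intro j hj a ha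
    by_contra hodd
    have hj' := h j hj
    obtain ⟨i, hi, hi'⟩ := E ((a-3)/2) (by omega)
    have hij : i = j := by
      apply hd' i hi j hj a <;> rw [memP] <;> omega
    subst hij
    have := key i hi
    omega
  obtain ⟨i, hi, hi'⟩ := E (2*m) le_rfl
  have hh := h i hi
  have h1 := Odd' i hi _ (Or.inl rfl)
  have h2 := Odd' i hi _ (Or.inr (Or.inl rfl))
  have hne : i ≠ i0 := by rintro rfl; omega
  have hie : i ∈ C.erase i0 := Finset.mem_erase.mpr ⟨hne, hi⟩
  by_cases hxy : x i = y i
  · omega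
  · apply no5 i hie (x i) (x i + 1) (y i) (y i + 1) (z i) <;> first | omega | (rw [memP]; omega)

theorem mem_dstar {L : ℕ} (I : Finset (ZMod L)) (d : ZMod L) :
    d ∈ dstar I ↔ (∃ p ∈ I, ∃ q ∈ I, p - q = d) ∧ d ≠ 0 := by
  simp only [dstar, dset, Finset.mem_sdiff, Finset.mem_image, Finset.mem_product,
    Finset.mem_singleton, Prod.exists]
  constructor
  · rintro ⟨⟨p, q, ⟨hp, hq⟩, h⟩, h0⟩; exact ⟨⟨p, hp, q, hq, h⟩, h0⟩
  · rintro ⟨⟨p, hp, q, hq, h⟩, h0⟩; exact ⟨⟨p, q, ⟨hp, hq⟩, h⟩, h0⟩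

theorem ncast_inj {L a b : ℕ} (ha : a < L) (hb : b < L) (h : (a : ZMod L) = b) : a = b := by
  rw [ZMod.natCast_eq_natCast_iff] at h
  exact Nat.ModEq.eq_of_lt_of_lt h ha hb

theorem exists_sorted {L : ℕ} [NeZero L] (I : Finset (ZMod L)) (hI : I.card = 3) :
    ∃ p q r : ℕ, p < q ∧ q < r ∧ r < L ∧ (p : ZMod L) ∈ I ∧ (q : ZMod L) ∈ I ∧ (r : ZMod L) ∈ I := by
  have hinj : (I.image ZMod.val).card = 3 := by
    rw [Finset.card_image_of_injective _ (ZMod.val_injective L), hI]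
  let e := (I.image ZMod.val).orderEmbOfFin hinj
  have hm : ∀ i, e i < L ∧ ((e i : ℕ) : ZMod L) ∈ I := by
    intro i
    have := (I.image ZMod.val).orderEmbOfFin_mem hinj i
    rw [Finset.mem_image] at this
    obtain ⟨a, ha, hae⟩ := this
    have hae' : a.val = e i := hae
    rw [← hae']
    refine ⟨ZMod.val_lt a, ?_⟩
    rw [ZMod.natCast_zmod_val]; exact ha
  exact ⟨e 0, e 1, e 2, e.strictMono (by decide), e.strictMono (by decide), (hm 2).1,
    (hm 0).2, (hm 1).2, (hm 2).2⟩

theorem dstar_of {L : ℕ} (I : Finset (ZMod L)) (p q : ℕ) (hpq : p < q) (hq : q < L)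
    (hp1 : (p : ZMod L) ∈ I) (hq1 : (q : ZMod L) ∈ I) :
    ((q - p : ℕ) : ZMod L) ∈ dstar I ∧ ((L - (q - p) : ℕ) : ZMod L) ∈ dstar I := by
  rw [mem_dstar, mem_dstar]
  have e1 : ((q - p : ℕ) : ZMod L) = q - p := by rw [Nat.cast_sub hpq.le]
  have e2 : ((L - (q - p) : ℕ) : ZMod L) = p - q := by
    rw [Nat.cast_sub (by omega), e1]; simp
  refine ⟨⟨⟨q, hq1, p, hp1, e1.symm⟩, ?_⟩, ⟨⟨p, hp1, q, hq1, e2.symm⟩, ?_⟩⟩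
  · intro h
    have := ncast_inj (L := L) (a := q - p) (b := 0) (by omega) (by omega) (by simpa using h)
    omega
  · intro h
    have := ncast_inj (L := L) (a := L - (q - p)) (b := 0) (by omega) (by omega) (by simpa using h)
    omega

theorem struct {L : ℕ} (hL : 2 ≤ L) (I : Finset (ZMod L)) (hI : I.card = 3)
    (h1 : (1 : ZMod L) ∉ dstar I) :
    ∃ x y z : ℕ, 2 ≤ x ∧ x ≤ y ∧ y ≤ z ∧ 2 * z ≤ L ∧ (x + y = z ∨ x + y + z = L) ∧
      (x : ZMod L) ∈ dstar I ∧ (y : ZMod L) ∈ dstar I ∧ (z : ZMod L) ∈ dstar I := by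
  have : NeZero L := ⟨by omega⟩
  obtain ⟨p, q, r, hpq, hqr, hr, hp, hq, hr'⟩ := exists_sorted I hI
  obtain ⟨a1, a2⟩ := dstar_of I p q hpq (by omega) hp hq
  obtain ⟨b1, b2⟩ := dstar_of I q r hqr hr hq hr'
  obtain ⟨c1, c2⟩ := dstar_of I p r (by omega) hr hp hr'
  have n1 : ∀ n : ℕ, (n : ZMod L) ∈ dstar I → n ≠ 1 := by
    rintro n hn rfl; simp at hn; exact h1 hn
  have := n1 _ a1
  have := n1 _ a2
  have := n1 _ b1
  have := n1 _ b2
  have := n1 _ c1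
  have := n1 _ c2
  -- sorting helpers
  have sort3 : ∀ a b c : ℕ, 2 ≤ a → 2 ≤ b → 2 ≤ c → 2 * a ≤ L → 2 * b ≤ L → 2 * c ≤ L →
      (a + b = c ∨ a + b + c = L) → 
      (a : ZMod L) ∈ dstar I → (b : ZMod L) ∈ dstar I → (c : ZMod L) ∈ dstar I →
      ∃ x y z : ℕ, 2 ≤ x ∧ x ≤ y ∧ y ≤ z ∧ 2 * z ≤ L ∧ (x + y = z ∨ x + y + z = L) ∧
      (x : ZMod L) ∈ dstar I ∧ (y : ZMod L) ∈ dstar I ∧ (z : ZMod L) ∈ dstar I := by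
    intro a b c ha hb hc ha' hb' hc' hs A B C
    rcases le_total a b with h1 | h1 <;> rcases le_total b c with h2 | h2 <;>
      rcases le_total a c with h3 | h3
    · exact ⟨a, b, c, by omega, by omega, by omega, by omega, by omega, A, B, C⟩
    · exact ⟨a, b, c, by omega, by omega, by omega, by omega, by omega, A, B, C⟩
    · exact ⟨a, c, b, by omega, by omega, by omega, by omega, by omega, A, C, B⟩
    · exact ⟨c, a, b, by omega, by omega, by omega, by omega, by omega, C, A, B⟩
    · exact ⟨b, a, c, by omega, by omega, by omega, by omega, by omega, B, A, C⟩
    · exact ⟨b, c, a, by omega, by omega, by omega, by omega, by omega, B, C, A⟩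
    · exact ⟨c, b, a, by omega, by omega, by omega, by omega, by omega, C, B, A⟩
    · exact ⟨c, b, a, by omega, by omega, by omega, by omega, by omega, C, B, A⟩
  by_cases g1 : 2 * (q - p) ≤ L
  · by_cases g2 : 2 * (r - q) ≤ L
    · by_cases g3 : 2 * (r - p) ≤ L
      · exact sort3 (q-p) (r-q) (r-p) (by omega) (by omega) (by omega) (by omega) (by omega)
          (by omega) (by omega) a1 b1 c1
      · exact sort3 (q-p) (r-q) (L-(r-p)) (by omega) (by omega) (by omega) (by omega) (by omega)
          (by omega) (by omega) a1 b1 c2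
    · exact sort3 (q-p) (L-(r-p)) (L-(r-q)) (by omega) (by omega) (by omega) (by omega) (by omega)
          (by omega) (by omega) a1 c2 b2
  · exact sort3 (r-q) (L-(r-p)) (L-(q-p)) (by omega) (by omega) (by omega) (by omega) (by omega)
          (by omega) (by omega) b1 c2 a2

theorem upper (m : ℕ) (hm : 1 ≤ m) (C : Finset (Finset (ZMod (8*m+4)))) (hC : IsSCAC (8*m+4) 3 C) :
    C.card ≤ m := by
  classical
  obtain ⟨h3, h1, hd⟩ := hC
  have hs : ∀ I : Finset (ZMod (8*m+4)), ∃ x y z : ℕ, I ∈ C → 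
      (2 ≤ x ∧ x ≤ y ∧ y ≤ z ∧ 2 * z ≤ 8*m+4 ∧ (x + y = z ∨ x + y + z = 8*m+4) ∧
      (x : ZMod (8*m+4)) ∈ dstar I ∧ (y : ZMod (8*m+4)) ∈ dstar I ∧ (z : ZMod (8*m+4)) ∈ dstar I) := by
    intro I
    by_cases hI : I ∈ C
    · obtain ⟨x, y, z, h⟩ := struct (by omega) I (h3 I hI) (h1 I hI).1
      exact ⟨x, y, z, fun _ => h⟩
    · exact ⟨0, 0, 0, fun h => absurd h hI⟩
  choose x y z hxyz using hs
  apply comb C x y z m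
  · intro I hI
    have := hxyz I hI
    refine ⟨this.1, this.2.1, this.2.2.1, by omega, this.2.2.2.2.1⟩
  · intro I hI J hJ hne
    have hsub : ∀ I ∈ C, ∀ a ∈ PP (x I) (y I) (z I), (a : ZMod (8*m+4)) ∈ dplus I := by
      intro I hI a ha
      obtain ⟨-, -, -, -, -, hx, hy, hz⟩ := hxyz I hI
      simp only [PP, Finset.mem_insert, Finset.mem_singleton] at ha
      have s0 : ∀ n : ℕ, (n : ZMod (8*m+4)) ∈ dstar I → (n : ZMod (8*m+4)) ∈ dplus I :=
        fun n hn => Finset.mem_union_left _ hn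
      have s1 : ∀ n : ℕ, (n : ZMod (8*m+4)) ∈ dstar I → ((n + 1 : ℕ) : ZMod (8*m+4)) ∈ dplus I := by
        intro n hn
        apply Finset.mem_union_right
        rw [Finset.mem_image]
        exact ⟨n, hn, by push_cast; rfl⟩
      rcases ha with rfl | rfl | rfl | rfl | rfl | rfl
      · exact s0 _ hx
      · exact s1 _ hx
      · exact s0 _ hy
      · exact s1 _ hy
      · exact s0 _ hz
      · exact s1 _ hz
    rw [Finset.disjoint_left]
    intro a ha hb
    exact Finset.disjoint_left.mp (hd I hI J hJ hne) (hsub I hI a ha) (hsub J hJ a hb)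

def W (m i : ℕ) : Finset (ZMod (8*m+4)) :=
  {0, ((2*(2*i+1) : ℤ) : ZMod (8*m+4)), ((4*(2*i+1) : ℤ) : ZMod (8*m+4))}

theorem icast_eq {m : ℕ} {a b : ℤ} (h : (a : ZMod (8*m+4)) = b)
    (hb : a - b < 2 * (8*m+4)) (hb' : -(2 * (8*m+4)) < a - b) :
    a - b = 0 ∨ a - b = 8*m+4 ∨ a - b = -(8*m+4) := by
  rw [ZMod.intCast_eq_intCast_iff_dvd_sub] at h
  obtain ⟨k, hk⟩ := h
  push_cast at hk
  have h1 : k < 2 := by nlinarith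
  have h2 : -2 < k := by nlinarith
  have : k = -1 ∨ k = 0 ∨ k = 1 := by omega
  rcases this with rfl | rfl | rfl <;> omega

theorem mem_dstar_W {m i : ℕ} {d : ZMod (8*m+4)} (hd : d ∈ dstar (W m i)) :
    ∃ e : ℤ, (e = 2*(2*i+1) ∨ e = -(2*(2*i+1)) ∨ e = 4*(2*i+1) ∨ e = -(4*(2*i+1))) ∧ d = (e : ZMod (8*m+4)) := by
  rw [mem_dstar] at hd
  obtain ⟨⟨p, hp, q, hq, rfl⟩, h0⟩ := hd
  simp only [W, Finset.mem_insert, Finset.mem_singleton] at hp hq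
  rcases hp with rfl | rfl | rfl <;> rcases hq with rfl | rfl | rfl
  · simp at h0
  · exact ⟨_, Or.inr (Or.inl rfl), by push_cast; ring⟩
  · exact ⟨_, Or.inr (Or.inr (Or.inr rfl)), by push_cast; ring⟩
  · exact ⟨_, Or.inl rfl, by push_cast; ring⟩
  · simp at h0
  · exact ⟨_, Or.inr (Or.inl rfl), by push_cast; ring⟩
  · exact ⟨_, Or.inr (Or.inr (Or.inl rfl)), by push_cast; ring⟩
  · exact ⟨_, Or.inl rfl, by push_cast; ring⟩
  · simp at h0

theorem W_card {m i : ℕ} (hi : i < m) : (W m i).card = 3 := by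
  rw [W, Finset.card_eq_three]
  refine ⟨_, _, _, ?_, ?_, ?_, rfl⟩
  · intro h
    have := icast_eq (m := m) (a := 0) (b := 2*(2*i+1)) (by simpa using h) (by omega) (by omega)
    omega
  · intro h
    have := icast_eq (m := m) (a := 0) (b := 4*(2*i+1)) (by simpa using h) (by omega) (by omega)
    omega
  · intro h
    have := icast_eq h (by omega) (by omega)
    omega

set_option maxHeartbeats 4000000 in
theorem W_disj {m i j : ℕ} (hi : i < m) (hj : j < m) (hij : i ≠ j) :
    Disjoint (dplus (W m i)) (dplus (W m j)) := by
  rw [Finset.disjoint_left]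
  intro a ha hb
  have key : ∀ k, k < m → a ∈ dplus (W m k) → ∃ e : ℤ, ∃ s : ℤ, (s = 0 ∨ s = 1) ∧
      (e = 2*(2*k+1) ∨ e = -(2*(2*k+1)) ∨ e = 4*(2*k+1) ∨ e = -(4*(2*k+1))) ∧
      a = ((e + s : ℤ) : ZMod (8*m+4)) := by
    intro k hk ha
    rw [dplus, Finset.mem_union, Finset.mem_image] at ha
    rcases ha with ha | ⟨b, hb, hba⟩
    · obtain ⟨e, he, h⟩ := mem_dstar_W ha
      rw [h]
      exact ⟨e, 0, Or.inl rfl, he, by rw [add_zero]⟩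
    · obtain ⟨e, he, h⟩ := mem_dstar_W hb
      rw [← hba, h]
      exact ⟨e, 1, Or.inr rfl, he, by rw [Int.cast_add, Int.cast_one]⟩
  obtain ⟨e, s, hs, he, h1⟩ := key i hi ha
  obtain ⟨f, t, ht, hf, h2⟩ := key j hj hb
  have be : -(8*m-4) ≤ e ∧ e ≤ 8*m-4 := by omega
  have bf : -(8*m-4) ≤ f ∧ f ≤ 8*m-4 := by omega
  have hx := icast_eq (h1.symm.trans h2) (by omega) (by omega)
  have hst : s = t := by omega
  subst hst
  rcases he with rfl | rfl | rfl | rfl <;> rcases hf with rfl | rfl | rfl | rfl <;> omega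

theorem lower (m : ℕ) : ∃ C : Finset (Finset (ZMod (8*m+4))), IsSCAC (8*m+4) 3 C ∧ C.card = m := by
  classical
  refine ⟨(Finset.range m).image (W m), ⟨?_, ?_, ?_⟩, ?_⟩
  · intro I hI
    simp only [Finset.mem_image, Finset.mem_range] at hI
    obtain ⟨i, hi, rfl⟩ := hI
    exact W_card hi
  · intro I hI
    simp only [Finset.mem_image, Finset.mem_range] at hI
    obtain ⟨i, hi, rfl⟩ := hI
    constructor
    · intro h
      obtain ⟨e, he, h⟩ := mem_dstar_W h
      have := icast_eq (m := m) (a := 1) (b := e) (by simpa using h) (by omega) (by omega)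
      omega
    · intro h
      obtain ⟨e, he, h⟩ := mem_dstar_W h
      have := icast_eq (m := m) (a := -1) (b := e) (by simpa using h) (by omega) (by omega)
      omega
  · intro I hI J hJ hne
    simp only [Finset.mem_image, Finset.mem_range] at hI hJ
    obtain ⟨i, hi, rfl⟩ := hI
    obtain ⟨j, hj, rfl⟩ := hJ
    exact W_disj hi hj (fun h => hne (by rw [h]))
  · rw [Finset.card_image_of_injOn, Finset.card_range]
    intro i hi j hj hij
    simp only [Finset.coe_range, Set.mem_Iio] at hi hj
    by_contra hne
    have hd := W_disj hi hj hne
    rw [← hij] at hd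
    have hc := W_card hi
    obtain ⟨p, hp, q, hq, hpq⟩ := Finset.one_lt_card.mp (by rw [hc]; norm_num : 1 < (W m i).card)
    have : p - q ∈ dplus (W m i) :=
      Finset.mem_union_left _ ((mem_dstar _ _).mpr ⟨⟨p, hp, q, hq, rfl⟩, sub_ne_zero.mpr hpq⟩)
    exact Finset.disjoint_left.mp hd this this

theorem MS_eq_of_mod8_eq_4 (L : ℕ) (hL : 18 ≤ L) (hmod : L % 8 = 4) :
    MS L 3 = (L - 4) / 8 := by
  obtain ⟨m, rfl⟩ : ∃ m, L = 8*m+4 := ⟨L / 8, by omega⟩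
  have hm : (8*m+4-4)/8 = m := by omega
  rw [hm]
  apply IsGreatest.csSup_eq
  constructor
  · exact lower m
  · rintro n ⟨C, hC, rfl⟩
    exact upper m (by omega) C hC
end
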